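/- arXiv:quant-ph/0606225 — 4 statements merged into one kernel-verified Lean document; each statement's English description precedes it below -/
import Mathlib

section
/- Let A = A₁⊗A₂ and R be finite-dimensional Hilbert spaces with duplicate copies A' = A₁'⊗A₂' and R'. Then, as operators on (A⊗R)⊗(A'⊗R') ≅ (A⊗A')⊗(R⊗R'), ∫_{U(A)} (U†⊗U†⊗I^{RR'}) (F^{A₂} ⊗ F^R) (U⊗U⊗I^{RR'}) dU = ( p Π₊^A + q Π₋^A ) ⊗ F^R, where F^{A₂} is regarded as I^{A₁A₁'}⊗F^{A₂} on A⊗A', p = (d_{A₁}+d_{A₂})/(d_A+1) and q = (d_{A₁}−d_{A₂})/(d_A−1), assuming d_A ≥ 2. -/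
open Matrix MeasureTheory
open scoped Kronecker ComplexOrder

noncomputable instance matMeas {m n : Type*} : MeasurableSpace (Matrix m n ℂ) :=
  (inferInstance : MeasurableSpace (m → n → ℂ))

/-- The swap operator `F^X` on `X ⊗ X'` (with `X' ≅ X`). -/
noncomputable def swapMat (α : Type*) [DecidableEq α] : Matrix (α × α) (α × α) ℂ :=
  Matrix.of fun i j => if i.1 = j.2 ∧ i.2 = j.1 then 1 else 0

/-- The operator `I^{A₁A₁'} ⊗ F^{A₂}` on `A ⊗ A'` for `A = A₁ ⊗ A₂`, i.e. the swap of the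
two `A₂` factors, written on the index ordering `(A₁ × A₂) × (A₁' × A₂')`. -/
noncomputable def swapA2 (α₁ α₂ : Type*) [DecidableEq α₁] [DecidableEq α₂] :
    Matrix ((α₁ × α₂) × (α₁ × α₂)) ((α₁ × α₂) × (α₁ × α₂)) ℂ :=
  Matrix.of fun i j =>
    if i.1.1 = j.1.1 ∧ i.2.1 = j.2.1 ∧ i.1.2 = j.2.2 ∧ i.2.2 = j.1.2 then 1 else 0

/-- `Π₊^A = (I + F^A)/2`, the projector onto the symmetric subspace of `A ⊗ A'`. -/
noncomputable def symProj (α : Type*) [DecidableEq α] : Matrix (α × α) (α × α) ℂ :=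
  (1/2 : ℂ) • ((1 : Matrix (α × α) (α × α) ℂ) + swapMat α)

/-- `Π₋^A = (I − F^A)/2`, the projector onto the antisymmetric subspace of `A ⊗ A'`. -/
noncomputable def antisymProj (α : Type*) [DecidableEq α] : Matrix (α × α) (α × α) ℂ :=
  (1/2 : ℂ) • ((1 : Matrix (α × α) (α × α) ℂ) - swapMat α)

/-- fourth moments of the entries -/
noncomputable def mom {ι : Type} [Fintype ι] [DecidableEq ι]
    (μ : Measure (Matrix.unitaryGroup ι ℂ)) (i j k l : ι) (a b c d : ι) : ℂ :=
  ∫ U : Matrix.unitaryGroup ι ℂ, star ((U : Matrix ι ι ℂ) a i) * star ((U : Matrix ι ι ℂ) b j)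
    * (U : Matrix ι ι ℂ) c k * (U : Matrix ι ι ℂ) d l ∂μ

lemma meas_entry {ι : Type} [Fintype ι] [DecidableEq ι] (a i : ι) :
    Measurable (fun U : Matrix.unitaryGroup ι ℂ => (U : Matrix ι ι ℂ) a i) := by
  have h1 : Measurable (fun U : Matrix.unitaryGroup ι ℂ => (U : Matrix ι ι ℂ)) :=
    measurable_subtype_coe
  have h2 : Measurable (fun M : Matrix ι ι ℂ => M a i) :=
    (measurable_pi_apply i).comp (measurable_pi_apply (X := fun _ : ι => ι → ℂ) a)
  exact h2.comp h1

lemma meas_mom {ι : Type} [Fintype ι] [DecidableEq ι] (i j k l : ι) (a b c d : ι) :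
    Measurable (fun U : Matrix.unitaryGroup ι ℂ =>
      star ((U : Matrix ι ι ℂ) a i) * star ((U : Matrix ι ι ℂ) b j)
    * (U : Matrix ι ι ℂ) c k * (U : Matrix ι ι ℂ) d l) := by
  have hs : Measurable (star : ℂ → ℂ) := continuous_star.measurable
  exact (((hs.comp (meas_entry a i)).mul (hs.comp (meas_entry b j))).mul (meas_entry c k)).mul
    (meas_entry d l)

lemma int_mom {ι : Type} [Fintype ι] [DecidableEq ι]
    (μ : Measure (Matrix.unitaryGroup ι ℂ)) [IsProbabilityMeasure μ] (i j k l : ι) (a b c d : ι) :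
    Integrable (fun U : Matrix.unitaryGroup ι ℂ =>
      star ((U : Matrix ι ι ℂ) a i) * star ((U : Matrix ι ι ℂ) b j)
    * (U : Matrix ι ι ℂ) c k * (U : Matrix ι ι ℂ) d l) μ := by
  refine Integrable.of_bound (meas_mom i j k l a b c d).aestronglyMeasurable 1 ?_
  refine Filter.Eventually.of_forall fun U => ?_
  have h := fun a i => entry_norm_bound_of_unitary U.2 a i
  simp only [norm_mul, norm_star]
  exact mul_le_one₀ (mul_le_one₀ (mul_le_one₀ (h _ _) (norm_nonneg _) (h _ _))
    (norm_nonneg _) (h _ _)) (norm_nonneg _) (h _ _)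

lemma meas_mul {ι : Type} [Fintype ι] [DecidableEq ι] (V : Matrix.unitaryGroup ι ℂ) :
    Measurable (fun U : Matrix.unitaryGroup ι ℂ => V * U) := by
  refine Measurable.subtype_mk (f := fun U : Matrix.unitaryGroup ι ℂ => (V : Matrix ι ι ℂ) * U) ?_
  refine measurable_pi_lambda (X := fun _ : ι => ι → ℂ) _ fun a => measurable_pi_lambda _ fun i => ?_
  simp only [Matrix.mul_apply]
  exact Finset.measurable_sum _ fun c _ => (meas_entry c i).const_mul _

lemma mom_inv {ι : Type} [Fintype ι] [DecidableEq ι]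
    (μ : Measure (Matrix.unitaryGroup ι ℂ)) [IsProbabilityMeasure μ]
    (hμ : ∀ V : Matrix.unitaryGroup ι ℂ, μ.map (fun U : Matrix.unitaryGroup ι ℂ => V * U) = μ)
    (V : Matrix ι ι ℂ) (hV : V ∈ Matrix.unitaryGroup ι ℂ) (i j k l : ι) (a b c d : ι) :
    mom μ i j k l a b c d = ∑ a', ∑ b', ∑ c', ∑ d',
      (star (V a a') * star (V b b') * V c c' * V d d') * mom μ i j k l a' b' c' d' := by
  conv_lhs => rw [mom, ← hμ ⟨V, hV⟩]
  rw [integral_map (meas_mul _).aemeasurable (meas_mom i j k l a b c d).aestronglyMeasurable]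
  have : ∀ U : Matrix.unitaryGroup ι ℂ,
      star (((⟨V, hV⟩ * U : Matrix.unitaryGroup ι ℂ) : Matrix ι ι ℂ) a i)
      * star (((⟨V, hV⟩ * U : Matrix.unitaryGroup ι ℂ) : Matrix ι ι ℂ) b j)
      * ((⟨V, hV⟩ * U : Matrix.unitaryGroup ι ℂ) : Matrix ι ι ℂ) c k
      * ((⟨V, hV⟩ * U : Matrix.unitaryGroup ι ℂ) : Matrix ι ι ℂ) d l
      = ∑ a', ∑ b', ∑ c', ∑ d', (star (V a a') * star (V b b') * V c c' * V d d') *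
        (star ((U : Matrix ι ι ℂ) a' i) * star ((U : Matrix ι ι ℂ) b' j)
          * (U : Matrix ι ι ℂ) c' k * (U : Matrix ι ι ℂ) d' l) := by
    intro U
    simp only [Matrix.UnitaryGroup.mul_val, Matrix.mul_apply, star_sum, star_mul']
    simp only [Finset.sum_mul, Finset.mul_sum]
    rw [Finset.sum_congr rfl (fun d' _ => Finset.sum_congr rfl fun c' _ => Finset.sum_comm)]
    rw [Finset.sum_congr rfl (fun d' _ => Finset.sum_comm)]
    rw [Finset.sum_comm]
    rw [Finset.sum_congr rfl (fun d' _ => Finset.sum_congr rfl fun c' _ => Finset.sum_comm)]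
    rw [Finset.sum_congr rfl (fun d' _ => Finset.sum_comm)]
    rw [Finset.sum_congr rfl (fun d' _ => Finset.sum_congr rfl fun c' _ => Finset.sum_comm)]
    refine Finset.sum_congr rfl fun a' _ => Finset.sum_congr rfl fun b' _ =>
      Finset.sum_congr rfl fun c' _ => Finset.sum_congr rfl fun d' _ => ?_
    ring
  simp_rw [this]
  have hi := fun a' b' c' d' => (int_mom μ i j k l a' b' c' d').const_mul
    (star (V a a') * star (V b b') * V c c' * V d d')
  rw [integral_finsetSum _ fun a' _ => integrable_finsetSum _ fun b' _ =>
    integrable_finsetSum _ fun c' _ => integrable_finsetSum _ fun d' _ => hi a' b' c' d']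
  refine Finset.sum_congr rfl fun a' _ => ?_
  rw [integral_finsetSum _ fun b' _ =>
    integrable_finsetSum _ fun c' _ => integrable_finsetSum _ fun d' _ => hi a' b' c' d']
  refine Finset.sum_congr rfl fun b' _ => ?_
  rw [integral_finsetSum _ fun c' _ => integrable_finsetSum _ fun d' _ => hi a' b' c' d']
  refine Finset.sum_congr rfl fun c' _ => ?_
  rw [integral_finsetSum _ fun d' _ => hi a' b' c' d']
  refine Finset.sum_congr rfl fun d' _ => ?_
  rw [integral_const_mul, mom]

lemma col_orth {ι : Type} [Fintype ι] [DecidableEq ι] (U : Matrix.unitaryGroup ι ℂ) (i k : ι) :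
    ∑ a, star ((U : Matrix ι ι ℂ) a i) * (U : Matrix ι ι ℂ) a k = if i = k then 1 else 0 := by
  have := congrFun (congrFun (Matrix.mem_unitaryGroup_iff'.1 U.2) i) k
  simpa [Matrix.mul_apply, Matrix.one_apply, Matrix.star_apply] using this

lemma mom_tr1 {ι : Type} [Fintype ι] [DecidableEq ι]
    (μ : Measure (Matrix.unitaryGroup ι ℂ)) [IsProbabilityMeasure μ] (i j k l : ι) :
    ∑ a, ∑ b, mom μ i j k l a b a b = (if i = k then 1 else 0) * (if j = l then 1 else 0) := by
  simp only [mom]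
  simp_rw [← integral_finsetSum _ (fun b _ => int_mom μ i j k l _ b _ b)]
  rw [← integral_finsetSum _ (fun a _ => integrable_finsetSum _ fun b _ => int_mom μ i j k l a b a b)]
  rw [integral_congr_ae (g := fun _ => (if i = k then (1:ℂ) else 0) * (if j = l then 1 else 0))]
  · simp
  · refine Filter.Eventually.of_forall fun U => ?_
    simp only [← col_orth U, Finset.sum_mul_sum]
    refine Finset.sum_congr rfl fun a' _ => Finset.sum_congr rfl fun b' _ => ?_
    ring

lemma mom_tr2 {ι : Type} [Fintype ι] [DecidableEq ι]
    (μ : Measure (Matrix.unitaryGroup ι ℂ)) [IsProbabilityMeasure μ] (i j k l : ι) :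
    ∑ a, ∑ b, mom μ i j k l a b b a = (if i = l then 1 else 0) * (if j = k then 1 else 0) := by
  simp only [mom]
  simp_rw [← integral_finsetSum _ (fun b _ => int_mom μ i j k l _ b b _)]
  rw [← integral_finsetSum _ (fun a _ => integrable_finsetSum _ fun b _ => int_mom μ i j k l a b b a)]
  rw [integral_congr_ae (g := fun _ => (if i = l then (1:ℂ) else 0) * (if j = k then 1 else 0))]
  · simp
  · refine Filter.Eventually.of_forall fun U => ?_
    simp only [← col_orth U, Finset.sum_mul_sum]
    refine Finset.sum_congr rfl fun a' _ => Finset.sum_congr rfl fun b' _ => ?_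
    ring

lemma tensor_struct {ι : Type} [Fintype ι] [DecidableEq ι] (T : ι → ι → ι → ι → ℂ)
    (hT : ∀ V ∈ Matrix.unitaryGroup ι ℂ, ∀ a b c d, T a b c d = ∑ a', ∑ b', ∑ c', ∑ d',
      (star (V a a') * star (V b b') * V c c' * V d d') * T a' b' c' d')
    (hc : 2 ≤ Fintype.card ι) :
    ∃ α β : ℂ, ∀ a b c d, T a b c d =
      α * ((if a = c then 1 else 0) * (if b = d then 1 else 0))
      + β * ((if a = d then 1 else 0) * (if b = c then 1 else 0)) := by
  have hdiag : ∀ v : ι → ℂ, (∀ a, v a * star (v a) = 1) → ∀ a b c d,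
      T a b c d = (star (v a) * star (v b) * v c * v d) * T a b c d := by
    intro v hv a b c d
    have hm : Matrix.diagonal v ∈ Matrix.unitaryGroup ι ℂ := by
      rw [Matrix.mem_unitaryGroup_iff, Matrix.star_eq_conjTranspose,
        Matrix.diagonal_conjTranspose, Matrix.diagonal_mul_diagonal]
      simp only [Pi.star_apply, hv]
      exact Matrix.diagonal_one
    conv_lhs => rw [hT _ hm]
    simp [Matrix.diagonal_apply, apply_ite]
  have hperm : ∀ σ : Equiv.Perm ι, ∀ a b c d, T a b c d = T (σ a) (σ b) (σ c) (σ d) := by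
    intro σ a b c d
    have hm : (Matrix.of fun a b => if σ a = b then (1:ℂ) else 0) ∈ Matrix.unitaryGroup ι ℂ := by
      rw [Matrix.mem_unitaryGroup_iff]
      ext x y
      simp [Matrix.mul_apply, Matrix.star_apply, Matrix.one_apply, apply_ite, eq_comm]
    conv_lhs => rw [hT _ hm]
    simp [apply_ite]
  have hv : ∀ x : ι, ∀ a, (if a = x then Complex.I else 1) *
      star (if a = x then Complex.I else 1) = 1 := by
    intro x a
    split_ifs <;> simp
  have hI2 : Complex.I * Complex.I = -1 := Complex.I_mul_I
  have hIne : (1:ℂ) - Complex.I ≠ 0 := by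
    intro h; have := congrArg Complex.re h; simp at this
  have hIne' : (1:ℂ) + Complex.I ≠ 0 := by
    intro h; have := congrArg Complex.re h; simp at this
  have key : ∀ t z : ℂ, 1 - z ≠ 0 → t = z * t → t = 0 := by
    intro t z hz h
    have : (1 - z) * t = 0 := by linear_combination h
    exact (mul_eq_zero.1 this).resolve_left hz
  have za : ∀ a b c d, a ≠ c → a ≠ d → T a b c d = 0 := by
    intro a b c d h1 h2
    refine key _ _ ?_ (hdiag _ (hv a) a b c d)
    by_cases hb : b = a
    · simp [hb, h1.symm, h2.symm]
    · simpa [hb, h1.symm, h2.symm] using hIne'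
  have zb : ∀ a b c d, b ≠ c → b ≠ d → T a b c d = 0 := by
    intro a b c d h1 h2
    refine key _ _ ?_ (hdiag _ (hv b) a b c d)
    by_cases hb : a = b
    · simp [hb, h1.symm, h2.symm]
    · simpa [hb, h1.symm, h2.symm] using hIne'
  have zc : ∀ a b c d, c ≠ a → c ≠ b → T a b c d = 0 := by
    intro a b c d h1 h2
    refine key _ _ ?_ (hdiag _ (hv c) a b c d)
    by_cases hb : d = c
    · simp [hb, h1.symm, h2.symm]
    · simpa [hb, h1.symm, h2.symm] using hIne
  have zd : ∀ a b c d, d ≠ a → d ≠ b → T a b c d = 0 := by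
    intro a b c d h1 h2
    refine key _ _ ?_ (hdiag _ (hv d) a b c d)
    by_cases hb : c = d
    · simp [hb, h1.symm, h2.symm]
    · simpa [hb, h1.symm, h2.symm] using hIne
  obtain ⟨x, y, hxy⟩ := Fintype.exists_pair_of_one_lt_card (α := ι) (by omega)
  have htrans : ∀ a b, a ≠ b → ∃ σ : Equiv.Perm ι, σ x = a ∧ σ y = b := by
    intro a b hab
    refine ⟨Equiv.swap (Equiv.swap x a y) b * Equiv.swap x a, ?_, ?_⟩
    · simp only [Equiv.Perm.mul_apply, Equiv.swap_apply_left]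
      refine Equiv.swap_apply_of_ne_of_ne ?_ hab
      intro h
      have h2 : Equiv.swap x a x = Equiv.swap x a y := by rw [Equiv.swap_apply_left]; exact h
      exact hxy ((Equiv.swap x a).injective h2)
    · simp [Equiv.Perm.mul_apply]
  have hα : ∀ a b, a ≠ b → T a b a b = T x y x y := by
    intro a b hab
    obtain ⟨σ, h1, h2⟩ := htrans a b hab
    rw [hperm σ x y x y, h1, h2]
  have hβ : ∀ a b, a ≠ b → T a b b a = T x y y x := by
    intro a b hab
    obtain ⟨σ, h1, h2⟩ := htrans a b hab
    rw [hperm σ x y y x, h1, h2]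
  have hγ : ∀ a, T a a a a = T x x x x := by
    intro a
    rw [hperm (Equiv.swap x a) x x x x, Equiv.swap_apply_left]
  have hrot : T x x x x = T x y x y + T x y y x := by
    let w : ι → ℂ := fun a => (if a = x then 1 else 0) + 2 * (if a = y then 1 else 0)
    have hw : ∑ a, w a * w a = 5 := by
      simp only [w, add_mul, mul_add, Finset.sum_add_distrib]
      simp [hxy, hxy.symm]; norm_num
    let V : Matrix ι ι ℂ := Matrix.of fun a b => (if a = b then 1 else 0) - (2/5) * (w a * w b)
    have hwr : ∀ a, (starRingEnd ℂ) (w a) = w a := by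
      intro a; simp only [w]; split_ifs <;> simp [map_ofNat (starRingEnd ℂ) 2]
    have hm : V ∈ Matrix.unitaryGroup ι ℂ := by
      rw [Matrix.mem_unitaryGroup_iff]
      ext a b
      have e : ∀ c, V a c * star V c b = (if a = c then (if b = c then 1 else 0) else 0)
          - (2/5) * (if a = c then w b * w c else 0) - (2/5) * (if b = c then w a * w c else 0)
          + (4/25) * (w a * w b) * (w c * w c) := by
        intro c
        simp only [V, Matrix.star_apply, Matrix.of_apply]
        simp only [RCLike.star_def, map_sub, map_mul, hwr, apply_ite (starRingEnd ℂ), map_one,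
          map_zero, map_div₀, map_ofNat]
        split_ifs <;> ring
      rw [Matrix.mul_apply, Finset.sum_congr rfl fun c _ => e c]
      rw [Finset.sum_add_distrib, Finset.sum_sub_distrib, Finset.sum_sub_distrib, ← Finset.mul_sum,
        ← Finset.mul_sum, ← Finset.mul_sum, hw]
      simp only [Finset.sum_ite_eq, Finset.mem_univ, if_true, Matrix.one_apply, eq_comm]
      ring
    have hVx : ∀ a, V x a = (3/5) * (if a = x then 1 else 0) - (4/5) * (if a = y then 1 else 0) := by
      intro a
      simp only [V, w, Matrix.of_apply, hxy, if_true, if_false, eq_comm (a := x) (b := a)]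
      split_ifs <;> ring
    have hVx' : ∀ a, star (V x a) = V x a := by
      intro a; rw [hVx]; split_ifs <;> simp
    have hsum : ∀ g : ι → ℂ, ∑ a, V x a * g a = (3/5) * g x - (4/5) * g y := by
      intro g
      simp only [hVx, sub_mul, Finset.sum_sub_distrib, mul_assoc, ← Finset.mul_sum]
      simp
    have h := hT V hm x x x x
    simp only [hVx', mul_assoc, ← Finset.mul_sum, hsum] at h
    rw [za x x y y hxy hxy, za x y y y hxy hxy, za y x x x hxy.symm hxy.symm,
      za y y x x hxy.symm hxy.symm, zb x y x x hxy.symm hxy.symm, zb y x y y hxy hxy,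
      zd x x x y hxy.symm hxy.symm, zc x x y x hxy.symm hxy.symm,
      zd y y y x hxy hxy, zc y y x y hxy hxy,
      hα y x hxy.symm, hβ y x hxy.symm, hγ y] at h
    linear_combination (625/288) * h
  refine ⟨T x y x y, T x y y x, fun a b c d => ?_⟩
  by_cases h1 : a = c
  · subst h1
    by_cases h2 : b = d
    · subst h2
      by_cases h3 : a = b
      · subst h3
        simp [hγ, hrot]
      · simp [h3, hα a b h3]
    · by_cases h3 : d = a
      · subst h3
        simp [h2, zb d b d d h2 h2]
      · simp [h2, Ne.symm h3, zd a b a d h3 (Ne.symm h2)]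
  · by_cases h2 : a = d
    · subst h2
      by_cases h3 : b = c
      · subst h3
        simp [h1, hβ a b h1]
      · simp [h1, h3, zc a b c a (Ne.symm h1) (Ne.symm h3)]
    · simp [h1, h2, za a b c d h1 h2]

/-- **Lemma 3 (Schur averaging).** With `A = A₁ ⊗ A₂`, `d_A ≥ 2`,
`∫ (U†⊗U†⊗I^{RR'}) (F^{A₂} ⊗ F^R) (U⊗U⊗I^{RR'}) dU = (p Π₊^A + q Π₋^A) ⊗ F^R`,
where `p = (d_{A₁}+d_{A₂})/(d_A+1)` and `q = (d_{A₁}−d_{A₂})/(d_A−1)`.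
The matrix equality is stated entrywise. -/
theorem schur_average
    {ιA₁ ιA₂ ιR : Type} [Fintype ιA₁] [DecidableEq ιA₁] [Fintype ιA₂] [DecidableEq ιA₂]
    [Fintype ιR] [DecidableEq ιR]
    (hdA : 2 ≤ Fintype.card ιA₁ * Fintype.card ιA₂)
    (μ : Measure (Matrix.unitaryGroup (ιA₁ × ιA₂) ℂ)) [IsProbabilityMeasure μ]
    (hμ : ∀ V : Matrix.unitaryGroup (ιA₁ × ιA₂) ℂ,
      μ.map (fun U : Matrix.unitaryGroup (ιA₁ × ιA₂) ℂ => V * U) = μ) :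
    ∀ i j : ((ιA₁ × ιA₂) × (ιA₁ × ιA₂)) × (ιR × ιR),
      (∫ U : Matrix.unitaryGroup (ιA₁ × ιA₂) ℂ,
          ((((U : Matrix (ιA₁ × ιA₂) (ιA₁ × ιA₂) ℂ)ᴴ ⊗ₖ (U : Matrix (ιA₁ × ιA₂) (ιA₁ × ιA₂) ℂ)ᴴ)
              ⊗ₖ (1 : Matrix (ιR × ιR) (ιR × ιR) ℂ))
            * (swapA2 ιA₁ ιA₂ ⊗ₖ swapMat ιR)
            * (((U : Matrix (ιA₁ × ιA₂) (ιA₁ × ιA₂) ℂ) ⊗ₖ (U : Matrix (ιA₁ × ιA₂) (ιA₁ × ιA₂) ℂ))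
              ⊗ₖ (1 : Matrix (ιR × ιR) (ιR × ιR) ℂ))) i j ∂μ)
      = (((((Fintype.card ιA₁ : ℂ) + (Fintype.card ιA₂ : ℂ)) /
              ((Fintype.card ιA₁ : ℂ) * (Fintype.card ιA₂ : ℂ) + 1)) • symProj (ιA₁ × ιA₂)
          + (((Fintype.card ιA₁ : ℂ) - (Fintype.card ιA₂ : ℂ)) /
              ((Fintype.card ιA₁ : ℂ) * (Fintype.card ιA₂ : ℂ) - 1)) • antisymProj (ιA₁ × ιA₂))
          ⊗ₖ swapMat ιR) i j := by
  intro i j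
  obtain ⟨⟨i1, i2⟩, r⟩ := i
  obtain ⟨⟨k1, k2⟩, s⟩ := j
  simp_rw [← Matrix.mul_kronecker_mul, Matrix.one_mul, Matrix.mul_one]
  simp only [Matrix.kronecker_apply (A := _ * _), Matrix.kronecker_apply (B := swapMat ιR)]
  rw [integral_mul_const]
  congr 1
  have hexp : ∀ U : Matrix.unitaryGroup (ιA₁ × ιA₂) ℂ,
      (((U : Matrix (ιA₁ × ιA₂) (ιA₁ × ιA₂) ℂ)ᴴ ⊗ₖ (U : Matrix (ιA₁ × ιA₂) (ιA₁ × ιA₂) ℂ)ᴴ)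
        * swapA2 ιA₁ ιA₂ * ((U : Matrix (ιA₁ × ιA₂) (ιA₁ × ιA₂) ℂ) ⊗ₖ
          (U : Matrix (ιA₁ × ιA₂) (ιA₁ × ιA₂) ℂ))) (i1, i2) (k1, k2)
      = ∑ y : (ιA₁ × ιA₂) × (ιA₁ × ιA₂), ∑ x : (ιA₁ × ιA₂) × (ιA₁ × ιA₂), swapA2 ιA₁ ιA₂ x y *
        (star ((U : Matrix (ιA₁ × ιA₂) (ιA₁ × ιA₂) ℂ) x.1 i1) *
        star ((U : Matrix (ιA₁ × ιA₂) (ιA₁ × ιA₂) ℂ) x.2 i2) *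
        (U : Matrix (ιA₁ × ιA₂) (ιA₁ × ιA₂) ℂ) y.1 k1 *
        (U : Matrix (ιA₁ × ιA₂) (ιA₁ × ιA₂) ℂ) y.2 k2) := by
    intro U
    rw [Matrix.mul_apply]
    refine Finset.sum_congr rfl fun y _ => ?_
    rw [Matrix.mul_apply, Finset.sum_mul]
    refine Finset.sum_congr rfl fun x _ => ?_
    simp only [Matrix.kroneckerMap_apply, Matrix.conjTranspose_apply]
    ring
  simp_rw [hexp]
  have hi := fun x y : (ιA₁ × ιA₂) × (ιA₁ × ιA₂) =>
    (int_mom μ i1 i2 k1 k2 x.1 x.2 y.1 y.2).const_mul (swapA2 ιA₁ ιA₂ x y)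
  rw [integral_finsetSum _ fun y _ => integrable_finsetSum _ fun x _ => hi x y]
  simp_rw [integral_finsetSum _ fun x _ => hi x _, integral_const_mul]
  change ∑ y, ∑ x, swapA2 ιA₁ ιA₂ x y * mom μ i1 i2 k1 k2 x.1 x.2 y.1 y.2 = _
  obtain ⟨α, β, hT⟩ := tensor_struct (mom μ i1 i2 k1 k2)
    (fun V hV a b c d => mom_inv μ hμ V hV i1 i2 k1 k2 a b c d)
    (by rwa [Fintype.card_prod])
  have t1 := mom_tr1 μ i1 i2 k1 k2
  have t2 := mom_tr2 μ i1 i2 k1 k2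
  have hS : ∑ y : (ιA₁ × ιA₂) × (ιA₁ × ιA₂), ∑ x : (ιA₁ × ιA₂) × (ιA₁ × ιA₂),
      swapA2 ιA₁ ιA₂ x y * mom μ i1 i2 k1 k2 x.1 x.2 y.1 y.2 =
      ∑ y : (ιA₁ × ιA₂) × (ιA₁ × ιA₂),
        (α * (if y.1.2 = y.2.2 then 1 else 0) + β * (if y.1.1 = y.2.1 then 1 else 0)) := by
    refine Finset.sum_congr rfl fun y _ => ?_
    obtain ⟨⟨c1, c2⟩, ⟨d1, d2⟩⟩ := y
    rw [Finset.sum_eq_single ((c1, d2), (d1, c2))]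
    · rw [hT]
      simp only [swapA2, Matrix.of_apply, Prod.mk.injEq]
      by_cases h1 : c1 = d1 <;> by_cases h2 : c2 = d2 <;> simp [h1, h2, eq_comm]
    · rintro ⟨⟨a1, a2⟩, ⟨b1, b2⟩⟩ _ hne
      have : ¬ (a1 = c1 ∧ b1 = d1 ∧ a2 = d2 ∧ b2 = c2) := by
        rintro ⟨rfl, rfl, rfl, rfl⟩; exact hne rfl
      simp [swapA2, this]
    · simp
  have hC : ∑ y : (ιA₁ × ιA₂) × (ιA₁ × ιA₂),
        (α * (if y.1.2 = y.2.2 then 1 else 0) + β * (if y.1.1 = y.2.1 then 1 else 0))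
      = α * ((Fintype.card ιA₁ : ℂ) * (Fintype.card ιA₂ * Fintype.card ιA₁))
        + β * ((Fintype.card ιA₁ : ℂ) * (Fintype.card ιA₂ * Fintype.card ιA₂)) := by
    have hin : ∀ a : ιA₁, ∑ b : ιA₁, ∑ _c : ιA₂, (if a = b then (1:ℂ) else 0)
        = Fintype.card ιA₂ := by
      intro a
      rw [Finset.sum_comm]
      simp
    rw [Finset.sum_add_distrib, ← Finset.mul_sum, ← Finset.mul_sum]
    simp only [Fintype.sum_prod_type, hin]
    simp
  rw [hS, hC]
  have e1 : (1 : Matrix ((ιA₁ × ιA₂) × (ιA₁ × ιA₂)) ((ιA₁ × ιA₂) × (ιA₁ × ιA₂)) ℂ)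
      (i1, i2) (k1, k2) = (if i1 = k1 then 1 else 0) * (if i2 = k2 then 1 else 0) := by
    simp [Matrix.one_apply, Prod.mk.injEq, ite_and]
    split_ifs <;> rfl
  have e2 : swapMat (ιA₁ × ιA₂) (i1, i2) (k1, k2)
      = (if i1 = k2 then 1 else 0) * (if i2 = k1 then 1 else 0) := by
    simp [swapMat, ite_and]
    split_ifs <;> rfl
  simp only [symProj, antisymProj, Matrix.add_apply, Matrix.sub_apply, Matrix.smul_apply,
    smul_eq_mul, e1, e2]
  rw [← t1, ← t2]
  simp only [hT, Finset.sum_add_distrib, ← Finset.mul_sum]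
  simp
  have hd : (2:ℝ) ≤ (Fintype.card ιA₁ : ℝ) * Fintype.card ιA₂ := by exact_mod_cast hdA
  have hp : (Fintype.card ιA₁ : ℂ) * Fintype.card ιA₂ + 1 ≠ 0 := by
    exact_mod_cast Nat.succ_ne_zero (Fintype.card ιA₁ * Fintype.card ιA₂)
  have hq : (Fintype.card ιA₁ : ℂ) * Fintype.card ιA₂ - 1 ≠ 0 := by
    intro h
    have h2 : (Fintype.card ιA₁ : ℂ) * Fintype.card ιA₂ = 1 := by linear_combination h
    have h3 : Fintype.card ιA₁ * Fintype.card ιA₂ = 1 := by exact_mod_cast h2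
    omega
  generalize (Fintype.card ιA₁ : ℂ) = m at *
  generalize (Fintype.card ιA₂ : ℂ) = n at *
  field_simp
  ring
end

section
/- Let ψ^{AR} be a density operator on A⊗R with A = A₁⊗A₂ and d_A ≥ 2. Then ∫_{U(A)} ‖ σ^{A₂R}(U) − σ^{A₂}(U) ⊗ σ^R(U) ‖₂² dU = ((d_{A₁} d_{A₂}² − d_{A₁})/(d_A² − 1)) · ( Tr[(ψ^{AR})²] − 2 Tr[ψ^{AR}(ψ^A⊗ψ^R)] + Tr[(ψ^A)²] Tr[(ψ^R)²] ). -/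
open Matrix MeasureTheory
open scoped Kronecker ComplexOrder

/-- Squared Hilbert–Schmidt norm `‖M‖₂² = Tr(Mᴴ M)`. -/
noncomputable def hsNormSq {n : Type*} [Fintype n] (M : Matrix n n ℂ) : ℝ :=
  (Mᴴ * M).trace.re

/-- `σ^{A₂R}(U) = Tr_{A₁}[(U ⊗ I_R) ψ (U ⊗ I_R)ᴴ]`. -/
noncomputable def sigmaA2R {ιA₁ ιA₂ ιR : Type} [Fintype ιA₁] [Fintype ιA₂] [Fintype ιR]
    [DecidableEq ιR]
    (ψ : Matrix ((ιA₁ × ιA₂) × ιR) ((ιA₁ × ιA₂) × ιR) ℂ)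
    (U : Matrix (ιA₁ × ιA₂) (ιA₁ × ιA₂) ℂ) : Matrix (ιA₂ × ιR) (ιA₂ × ιR) ℂ :=
  Matrix.of fun i j => ∑ a₁ : ιA₁,
    ((U ⊗ₖ (1 : Matrix ιR ιR ℂ)) * ψ * (U ⊗ₖ (1 : Matrix ιR ιR ℂ))ᴴ)
      ((a₁, i.1), i.2) ((a₁, j.1), j.2)

/-- Partial trace over the first tensor factor. -/
noncomputable def ptrFst {α β : Type*} [Fintype α] (M : Matrix (α × β) (α × β) ℂ) :
    Matrix β β ℂ :=
  Matrix.of fun i j => ∑ a : α, M (a, i) (a, j)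

/-- Partial trace over the second tensor factor. -/
noncomputable def ptrSnd {α β : Type*} [Fintype β] (M : Matrix (α × β) (α × β) ℂ) :
    Matrix α α ℂ :=
  Matrix.of fun i j => ∑ b : β, M (i, b) (j, b)

section Haar
set_option linter.unusedSectionVars false
set_option linter.unusedSimpArgs false
variable {n : Type} [Fintype n] [DecidableEq n]

theorem entry_meas (i j : n) :
    Measurable (fun U : Matrix.unitaryGroup n ℂ => (U : Matrix n n ℂ) i j) := by
  have h1 : Measurable (fun U : Matrix.unitaryGroup n ℂ => (U : Matrix n n ℂ)) :=
    measurable_subtype_coe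
  have h2 : Measurable (fun M : n → n → ℂ => M i j) :=
    (measurable_pi_apply j).comp (measurable_pi_apply i)
  exact h2.comp h1

theorem left_meas (V : Matrix.unitaryGroup n ℂ) :
    Measurable (fun U : Matrix.unitaryGroup n ℂ => V * U) := by
  apply Measurable.subtype_mk
  refine measurable_pi_lambda _ fun i => measurable_pi_lambda _ fun j => ?_
  simp only [Matrix.mul_apply]
  exact Finset.measurable_sum _ fun k _ => (entry_meas k j).const_mul _

/-- conjugation -/
def conjY (M : Matrix n n ℂ) (U : Matrix.unitaryGroup n ℂ) : Matrix n n ℂ :=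
  (U : Matrix n n ℂ) * M * (U : Matrix n n ℂ)ᴴ

theorem conjY_apply (M : Matrix n n ℂ) (U : Matrix.unitaryGroup n ℂ) (i j : n) :
    conjY M U i j = ∑ l, (∑ k, (U : Matrix n n ℂ) i k * M k l) * star ((U : Matrix n n ℂ) j l) := by
  simp [conjY, Matrix.mul_apply]

theorem conjY_meas (M : Matrix n n ℂ) (i j : n) : Measurable (fun U => conjY M U i j) := by
  simp only [conjY_apply]
  refine Finset.measurable_sum _ fun l _ => Measurable.mul ?_ ?_
  · exact Finset.measurable_sum _ fun k _ => (entry_meas i k).mul_const _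
  · exact Complex.continuous_conj.measurable.comp (entry_meas j l)

theorem conjY_bound (M : Matrix n n ℂ) (i j : n) (U : Matrix.unitaryGroup n ℂ) :
    ‖conjY M U i j‖ ≤ ∑ l, ∑ k, ‖M k l‖ := by
  rw [conjY_apply]
  refine (norm_sum_le _ _).trans (Finset.sum_le_sum fun l _ => ?_)
  rw [norm_mul, norm_star]
  have h := entry_norm_bound_of_unitary U.2
  calc _ ≤ ‖∑ k, (U : Matrix n n ℂ) i k * M k l‖ * 1 := by gcongr; exact h _ _
    _ ≤ ∑ k, ‖M k l‖ := by
      rw [mul_one]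
      refine (norm_sum_le _ _).trans (Finset.sum_le_sum fun k _ => ?_)
      rw [norm_mul]
      calc _ ≤ 1 * ‖M k l‖ := by gcongr; exact h _ _
        _ = _ := one_mul _

theorem conjY_mul (M : Matrix n n ℂ) (V U : Matrix.unitaryGroup n ℂ) :
    conjY M (V * U) = (V : Matrix n n ℂ) * conjY M U * (V : Matrix n n ℂ)ᴴ := by
  simp [conjY, Matrix.conjTranspose_mul, Matrix.mul_assoc]

variable (μ : Measure (Matrix.unitaryGroup n ℂ)) [IsProbabilityMeasure μ]

theorem pair_int (M : Matrix n n ℂ) (i j k l : n) :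
    Integrable (fun U => conjY M U i j * star (conjY M U k l)) μ := by
  refine Integrable.of_bound (C := (∑ l, ∑ k, ‖M k l‖) * (∑ l, ∑ k, ‖M k l‖)) ?_ ?_
  · exact ((conjY_meas M i j).mul
      (Complex.continuous_conj.measurable.comp (conjY_meas M k l))).aestronglyMeasurable
  · refine Filter.Eventually.of_forall fun U => ?_
    rw [norm_mul, norm_star]
    exact mul_le_mul (conjY_bound M i j U) (conjY_bound M k l U) (norm_nonneg _)
      ((norm_nonneg _).trans (conjY_bound M i j U))

/-- second moments -/
noncomputable def GG (M : Matrix n n ℂ) (i j k l : n) : ℂ :=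
  ∫ U, conjY M U i j * star (conjY M U k l) ∂μ

theorem GG_inv (hμ : ∀ V : Matrix.unitaryGroup n ℂ,
      μ.map (fun U : Matrix.unitaryGroup n ℂ => V * U) = μ)
    (M : Matrix n n ℂ) (V : Matrix.unitaryGroup n ℂ) (i j k l : n) :
    GG μ M i j k l = ∫ U, ((V : Matrix n n ℂ) * conjY M U * (V : Matrix n n ℂ)ᴴ) i j *
      star (((V : Matrix n n ℂ) * conjY M U * (V : Matrix n n ℂ)ᴴ) k l) ∂μ := by
  unfold GG
  conv_lhs => rw [← hμ V]
  rw [integral_map (left_meas V).aemeasurable]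
  · simp only [conjY_mul]
  · exact ((conjY_meas M i j).mul
      (Complex.continuous_conj.measurable.comp (conjY_meas M k l))).aestronglyMeasurable

/-- diagonal phase unitary -/
noncomputable def phaseU (p : n) : Matrix.unitaryGroup n ℂ :=
  ⟨Matrix.diagonal (fun x => if x = p then Complex.I else 1), by
    rw [Matrix.mem_unitaryGroup_iff, Matrix.star_eq_conjTranspose, Matrix.diagonal_conjTranspose,
      Matrix.diagonal_mul_diagonal, ← Matrix.diagonal_one]
    congr 1; ext x
    by_cases h : x = p <;> simp [h]⟩

theorem GG_phase (hμ : ∀ V : Matrix.unitaryGroup n ℂ,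
      μ.map (fun U : Matrix.unitaryGroup n ℂ => V * U) = μ)
    (M : Matrix n n ℂ) (p i j k l : n) :
    GG μ M i j k l = ((if i = p then Complex.I else 1) * star (if j = p then Complex.I else 1) *
      star (if k = p then Complex.I else 1) * (if l = p then Complex.I else 1)) *
      GG μ M i j k l := by
  conv_lhs => rw [GG_inv μ hμ M (phaseU p)]
  rw [GG, ← integral_const_mul]
  congr 1; ext U
  simp only [phaseU, Matrix.diagonal_conjTranspose, Matrix.diagonal_mul, Matrix.mul_diagonal,
    Pi.star_apply, star_mul', star_star]
  ring

theorem GG_zero (hμ : ∀ V : Matrix.unitaryGroup n ℂ,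
      μ.map (fun U : Matrix.unitaryGroup n ℂ => V * U) = μ)
    (M : Matrix n n ℂ) (i j k l : n) (h : ¬ ((i = j ∧ k = l) ∨ (i = k ∧ j = l))) :
    GG μ M i j k l = 0 := by
  have key : ∀ z g : ℂ, z ≠ 1 → g = z * g → g = 0 := by
    intro z g hz hg
    have : (1 - z) * g = 0 := by linear_combination hg
    rcases mul_eq_zero.1 this with h | h
    · exact absurd (sub_eq_zero.1 h).symm hz
    · exact h
  have hI : Complex.I ≠ 1 := by intro h; simpa using congrArg Complex.re h
  by_cases hij : i = j
  · have hkl : k ≠ l := by tauto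
    refine key _ _ ?_ (GG_phase μ hμ M l i j k l)
    subst hij
    by_cases h1 : i = l <;> simp [h1, hkl, hI]
  · by_cases hik : i = k
    · have hjl : j ≠ l := by tauto
      refine key _ _ ?_ (GG_phase μ hμ M l i j k l)
      subst hik
      by_cases h1 : i = l <;> simp [h1, hjl, hI]
    · refine key _ _ ?_ (GG_phase μ hμ M i i j k l)
      by_cases h1 : l = i
      · simp [h1, Ne.symm hij, Ne.symm hik]
        norm_num
      · simp [h1, Ne.symm (Ne.intro hij), Ne.symm (Ne.intro hik), hI]

/-- permutation matrix of a swap -/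
noncomputable def swapM (p q : n) : Matrix n n ℂ :=
  Matrix.of fun x y => if y = Equiv.swap p q x then 1 else 0

theorem swapM_mul (p q : n) (Y : Matrix n n ℂ) (i j : n) :
    (swapM p q * Y) i j = Y (Equiv.swap p q i) j := by
  simp [swapM, Matrix.mul_apply]

theorem mul_swapM (p q : n) (Y : Matrix n n ℂ) (i j : n) :
    (Y * swapM p q) i j = Y i (Equiv.swap p q j) := by
  have : ∀ x, (j = Equiv.swap p q x) ↔ (x = Equiv.swap p q j) := by
    intro x; constructor <;> (rintro rfl; simp)
  simp [swapM, Matrix.mul_apply, this]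

theorem swapM_star (p q : n) : (swapM p q)ᴴ = swapM p q := by
  ext x y
  have : (x = Equiv.swap p q y) ↔ (y = Equiv.swap p q x) := by
    constructor <;> (rintro rfl; simp)
  simp only [swapM, Matrix.conjTranspose_apply, Matrix.of_apply, this]
  split_ifs <;> simp

theorem swapM_sq (p q : n) : swapM p q * swapM p q = 1 := by
  ext x y
  rw [swapM_mul]
  simp [swapM, Matrix.one_apply, eq_comm]

noncomputable def swapU (p q : n) : Matrix.unitaryGroup n ℂ :=
  ⟨swapM p q, by
    rw [Matrix.mem_unitaryGroup_iff, Matrix.star_eq_conjTranspose, swapM_star, swapM_sq]⟩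

theorem GG_swap (hμ : ∀ V : Matrix.unitaryGroup n ℂ,
      μ.map (fun U : Matrix.unitaryGroup n ℂ => V * U) = μ)
    (M : Matrix n n ℂ) (p q i j k l : n) :
    GG μ M i j k l = GG μ M (Equiv.swap p q i) (Equiv.swap p q j) (Equiv.swap p q k)
      (Equiv.swap p q l) := by
  rw [GG_inv μ hμ M (swapU p q)]
  simp only [swapU, swapM_star, mul_swapM, swapM_mul, GG]

theorem GG_two (hμ : ∀ V : Matrix.unitaryGroup n ℂ,
      μ.map (fun U : Matrix.unitaryGroup n ℂ => V * U) = μ)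
    (M : Matrix n n ℂ) (i j i' j' : n) (h : i ≠ j) (h' : i' ≠ j') :
    GG μ M i i i i = GG μ M i' i' i' i' ∧ GG μ M i i j j = GG μ M i' i' j' j' ∧
      GG μ M i j i j = GG μ M i' j' i' j' := by
  have h1 : Equiv.swap i i' j ≠ i' := by
    intro hh
    apply h
    have := congrArg (Equiv.swap i i') hh
    simpa using this.symm
  have s1 := GG_swap μ hμ M i i'
  have s2 := GG_swap μ hμ M (Equiv.swap i i' j) j'
  have h2 : Equiv.swap (Equiv.swap i i' j) j' i' = i' :=
    Equiv.swap_apply_of_ne_of_ne h1.symm h'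
  refine ⟨?_, ?_, ?_⟩
  · rw [s1]; simp
  · rw [s1, s2]; simp [h2]
  · rw [s1, s2]; simp [h2]

noncomputable def hadU (p q : n) : Matrix.unitaryGroup n ℂ :=
  ⟨((1 + Complex.I) / 2) • 1 + ((1 - Complex.I) / 2) • swapM p q, by
    rw [Matrix.mem_unitaryGroup_iff, Matrix.star_eq_conjTranspose]
    simp only [Matrix.conjTranspose_add, Matrix.conjTranspose_smul, Matrix.conjTranspose_one,
      swapM_star, add_mul, mul_add, smul_mul_assoc, mul_smul_comm, swapM_sq, mul_one, one_mul]
    have : (star ((1 + Complex.I) / 2) : ℂ) = (1 - Complex.I) / 2 := by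
      simp [Complex.ext_iff]
    have h2 : (star ((1 - Complex.I) / 2) : ℂ) = (1 + Complex.I) / 2 := by
      simp [Complex.ext_iff]
    rw [this, h2]
    have e1 : (1 + Complex.I) / 2 * ((1 - Complex.I) / 2) = 1 / 2 := by
      linear_combination (-1/4 : ℂ) * Complex.I_sq
    have e2 : (1 - Complex.I) / 2 * ((1 + Complex.I) / 2) = 1 / 2 := by
      linear_combination (-1/4 : ℂ) * Complex.I_sq
    have e3 : (1 + Complex.I) / 2 * ((1 + Complex.I) / 2) = Complex.I / 2 := by
      linear_combination (1/4 : ℂ) * Complex.I_sq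
    have e4 : (1 - Complex.I) / 2 * ((1 - Complex.I) / 2) = - (Complex.I / 2) := by
      linear_combination (1/4 : ℂ) * Complex.I_sq
    ext x y
    simp only [Matrix.add_apply, Matrix.smul_apply, smul_eq_mul]
    generalize (1 : Matrix n n ℂ) x y = o
    generalize swapM p q x y = t
    linear_combination o * e1 + o * e2 + t * e3 + t * e4⟩

theorem hadU_diag (p q : n) (Y : Matrix n n ℂ) :
    (((hadU p q : Matrix.unitaryGroup n ℂ) : Matrix n n ℂ) * Y *
      ((hadU p q : Matrix.unitaryGroup n ℂ) : Matrix n n ℂ)ᴴ) p p =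
      (1 / 2) * Y p p + (1 / 2) * Y q q + (- Complex.I / 2) * Y q p + (Complex.I / 2) * Y p q := by
  simp only [hadU, Matrix.conjTranspose_add, Matrix.conjTranspose_smul, Matrix.conjTranspose_one,
      swapM_star, add_mul, mul_add, smul_mul_assoc, mul_smul_comm, mul_one, one_mul,
      Matrix.add_apply, Matrix.smul_apply, smul_eq_mul, mul_swapM, swapM_mul,
      Equiv.swap_apply_left]
  have h1 : (star ((1 + Complex.I) / 2) : ℂ) = (1 - Complex.I) / 2 := by
    simp [Complex.ext_iff]
  have h2 : (star ((1 - Complex.I) / 2) : ℂ) = (1 + Complex.I) / 2 := by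
    simp [Complex.ext_iff]
  rw [h1, h2]
  linear_combination (-1/4 * Y p p - 1/4 * Y q q + 1/4 * Y q p + 1/4 * Y p q) * Complex.I_sq

theorem GG_lin {κ : Type} [Fintype κ] (M : Matrix n n ℂ) (c : κ → ℂ) (f g : κ → n) :
    Integrable (fun U => (∑ a, c a * conjY M U (f a) (g a)) *
      star (∑ a, c a * conjY M U (f a) (g a))) μ ∧
    ∫ U, (∑ a, c a * conjY M U (f a) (g a)) *
      star (∑ a, c a * conjY M U (f a) (g a)) ∂μ =
      ∑ a, ∑ b, c a * star (c b) * GG μ M (f a) (g a) (f b) (g b) := by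
  have e : (fun U => (∑ a, c a * conjY M U (f a) (g a)) *
      star (∑ a, c a * conjY M U (f a) (g a))) = fun U => ∑ a, ∑ b, c a * star (c b) *
        (conjY M U (f a) (g a) * star (conjY M U (f b) (g b))) := by
    ext U
    rw [star_sum, Finset.sum_mul_sum]
    refine Finset.sum_congr rfl fun a _ => Finset.sum_congr rfl fun b _ => ?_
    rw [star_mul']; ring
  rw [e]
  have hi : ∀ a b, Integrable (fun U => c a * star (c b) *
        (conjY M U (f a) (g a) * star (conjY M U (f b) (g b)))) μ :=
    fun a b => (pair_int μ M _ _ _ _).const_mul _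
  refine ⟨integrable_finsetSum _ fun a _ => integrable_finsetSum _ fun b _ => hi a b, ?_⟩
  rw [integral_finsetSum _ fun a _ => integrable_finsetSum _ fun b _ => hi a b]
  refine Finset.sum_congr rfl fun a _ => ?_
  rw [integral_finsetSum _ fun b _ => hi a b]
  refine Finset.sum_congr rfl fun b _ => ?_
  rw [integral_const_mul, GG]

theorem GG_had (hμ : ∀ V : Matrix.unitaryGroup n ℂ,
      μ.map (fun U : Matrix.unitaryGroup n ℂ => V * U) = μ)
    (M : Matrix n n ℂ) (p q : n) (h : p ≠ q) :
    GG μ M p p p p = GG μ M p p q q + GG μ M p q p q := by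
  have h1 := GG_inv μ hμ M (hadU p q) p p p p
  simp only [hadU_diag] at h1
  have h2 := (GG_lin μ M ![1/2, 1/2, -Complex.I/2, Complex.I/2] ![p, q, q, p] ![p, q, p, q]).2
  simp only [Fin.sum_univ_four, Matrix.cons_val] at h2
  rw [h2] at h1
  have z := GG_zero μ hμ M
  have t := GG_two μ hμ M q p p q h.symm h
  have hq := h.symm
  rw [z p p q p (by tauto), z p p p q (by tauto), z q q q p (by tauto), z q q p q (by tauto),
    z q p p p (by tauto), z q p q q (by tauto), z p q p p (by tauto), z p q q q (by tauto),
    z p q q p (by tauto), z q p p q (by tauto), t.1, t.2.1, t.2.2] at h1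
  have s1 : star (1/2 : ℂ) = 1/2 := by simp
  have s2 : star (-Complex.I/2 : ℂ) = Complex.I/2 := by simp
  have s3 : star (Complex.I/2 : ℂ) = -Complex.I/2 := by simp
  rw [s1, s2, s3] at h1
  linear_combination 2 * h1 - GG μ M p q p q * Complex.I_sq

theorem GG_form (hμ : ∀ V : Matrix.unitaryGroup n ℂ,
      μ.map (fun U : Matrix.unitaryGroup n ℂ => V * U) = μ)
    (M : Matrix n n ℂ) (hd : 2 ≤ Fintype.card n) : ∃ b c : ℂ, ∀ i j k l,
    GG μ M i j k l = b * ((if i = j then 1 else 0) * (if k = l then 1 else 0)) +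
      c * ((if i = k then 1 else 0) * (if j = l then 1 else 0)) := by
  obtain ⟨p, q, hpq⟩ := Fintype.exists_pair_of_one_lt_card (α := n) (by omega)
  refine ⟨GG μ M p p q q, GG μ M p q p q, fun i j k l => ?_⟩
  have hex : ∃ m, i ≠ m := by
    by_cases h : i = p
    · exact ⟨q, h ▸ hpq⟩
    · exact ⟨p, h⟩
  by_cases h : (i = j ∧ k = l) ∨ (i = k ∧ j = l)
  · rcases h with ⟨rfl, rfl⟩ | ⟨rfl, rfl⟩
    · by_cases hik : i = k
      · subst hik
        obtain ⟨m, hm⟩ := hex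
        rw [(GG_two μ hμ M i m p q hm hpq).1, GG_had μ hμ M p q hpq]
        simp
      · rw [(GG_two μ hμ M i k p q hik hpq).2.1]
        simp [hik]
    · by_cases hij : i = j
      · subst hij
        obtain ⟨m, hm⟩ := hex
        rw [(GG_two μ hμ M i m p q hm hpq).1, GG_had μ hμ M p q hpq]
        simp
      · rw [(GG_two μ hμ M i j p q hij hpq).2.2]
        simp [hij]
  · rw [GG_zero μ hμ M i j k l h]
    have h1 : ¬ (i = j ∧ k = l) := fun hh => h (Or.inl hh)
    have h2 : ¬ (i = k ∧ j = l) := fun hh => h (Or.inr hh)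
    simp only [← ite_and, mul_ite, mul_one, mul_zero, ite_mul, one_mul, zero_mul]
    split_ifs <;> simp_all

theorem conjY_trace (M : Matrix n n ℂ) (U : Matrix.unitaryGroup n ℂ) :
    (conjY M U).trace = M.trace := by
  have h : (U : Matrix n n ℂ)ᴴ * (U : Matrix n n ℂ) = 1 :=
    Matrix.mem_unitaryGroup_iff'.1 U.2
  rw [conjY, Matrix.trace_mul_comm, ← Matrix.mul_assoc, h, one_mul]

theorem conjY_norm (M : Matrix n n ℂ) (U : Matrix.unitaryGroup n ℂ) :
    ∑ i, ∑ j, conjY M U i j * star (conjY M U i j) = (M * Mᴴ).trace := by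
  have h : (U : Matrix n n ℂ)ᴴ * (U : Matrix n n ℂ) = 1 :=
    Matrix.mem_unitaryGroup_iff'.1 U.2
  have h1 : ∑ i, ∑ j, conjY M U i j * star (conjY M U i j) =
      (conjY M U * (conjY M U)ᴴ).trace := by
    simp [Matrix.trace, Matrix.mul_apply]
  have h2 : conjY M U * (conjY M U)ᴴ = conjY (M * Mᴴ) U := by
    simp only [conjY, Matrix.conjTranspose_mul, Matrix.conjTranspose_conjTranspose]
    calc _ = (U : Matrix n n ℂ) * M * ((U : Matrix n n ℂ)ᴴ * (U : Matrix n n ℂ)) * Mᴴ *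
          (U : Matrix n n ℂ)ᴴ := by simp only [Matrix.mul_assoc]
      _ = _ := by rw [h, mul_one]; simp only [Matrix.mul_assoc]
  rw [h1, h2, conjY_trace]

theorem GG_val (hμ : ∀ V : Matrix.unitaryGroup n ℂ,
      μ.map (fun U : Matrix.unitaryGroup n ℂ => V * U) = μ)
    (M : Matrix n n ℂ) (hd : 2 ≤ Fintype.card n) (hM : M.trace = 0) (i j k l : n) :
    GG μ M i j k l = (M * Mᴴ).trace / ((Fintype.card n : ℂ) ^ 2 - 1) *
      (((if i = k then 1 else 0) * (if j = l then 1 else 0)) -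
      ((if i = j then 1 else 0) * (if k = l then 1 else 0)) / (Fintype.card n : ℂ)) := by
  obtain ⟨b, c, hG⟩ := GG_form μ hμ M hd
  have e1 : b * (Fintype.card n : ℂ) ^ 2 + c * (Fintype.card n : ℂ) = 0 := by
    have h := (GG_lin μ M (fun _ : n => 1) id id).2
    have ht : ∀ U, ∑ a, conjY M U a a = 0 := fun U => (conjY_trace M U).trans hM
    simp only [id, one_mul, ht, zero_mul, integral_zero, star_one, hG] at h
    simp [Finset.sum_add_distrib] at h
    linear_combination -h
  have e2 : b * (Fintype.card n : ℂ) + c * (Fintype.card n : ℂ) ^ 2 = (M * Mᴴ).trace := by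
    have h : ∑ i, ∑ j, GG μ M i j i j = (M * Mᴴ).trace := by
      have : ∫ U, (∑ i, ∑ j, conjY M U i j * star (conjY M U i j)) ∂μ = (M * Mᴴ).trace := by
        simp only [conjY_norm]; simp
      rw [← this, integral_finsetSum _ fun a _ => integrable_finsetSum _ fun b _ =>
        pair_int μ M _ _ _ _]
      refine Finset.sum_congr rfl fun a _ => ?_
      rw [integral_finsetSum _ fun b _ => pair_int μ M _ _ _ _]
      rfl
    simp only [hG] at h
    simp [Finset.sum_add_distrib] at h
    linear_combination h
  have hd0 : (Fintype.card n : ℂ) ≠ 0 := by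
    have : Fintype.card n ≠ 0 := by omega
    exact_mod_cast this
  have hd1 : (Fintype.card n : ℂ) ^ 2 - 1 ≠ 0 := by
    intro h
    have h' : (Fintype.card n) ^ 2 = 1 := by exact_mod_cast sub_eq_zero.1 h
    nlinarith
  rw [hG, ← e2]
  have hb : c = - b * (Fintype.card n : ℂ) := by
    have : (Fintype.card n : ℂ) * (c + b * (Fintype.card n : ℂ)) = 0 := by linear_combination e1
    rcases mul_eq_zero.1 this with h | h
    · exact absurd h hd0
    · linear_combination h
  subst hb
  field_simp
  ring
end Haar

section Red
variable {ιA₁ ιA₂ ιR : Type} [Fintype ιA₁] [DecidableEq ιA₁] [Fintype ιA₂] [DecidableEq ιA₂]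
    [Fintype ιR] [DecidableEq ιR]
set_option linter.unusedSectionVars false
set_option linter.unusedSimpArgs false

/-- A-block of an operator on AR -/
def blk {α ρ : Type} (ψ : Matrix (α × ρ) (α × ρ) ℂ) (r s : ρ) : Matrix α α ℂ :=
  Matrix.of fun x y => ψ (x, r) (y, s)

theorem sigma_apply (ψ : Matrix ((ιA₁ × ιA₂) × ιR) ((ιA₁ × ιA₂) × ιR) ℂ)
    (U : Matrix.unitaryGroup (ιA₁ × ιA₂) ℂ) (p q : ιA₂) (r s : ιR) :
    sigmaA2R ψ (U : Matrix (ιA₁ × ιA₂) (ιA₁ × ιA₂) ℂ) (p, r) (q, s) =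
      ∑ a, conjY (blk ψ r s) U (a, p) (a, q) := by
  simp only [sigmaA2R, Matrix.of_apply]
  refine Finset.sum_congr rfl fun a _ => ?_
  rw [conjY_apply, Matrix.mul_apply, Fintype.sum_prod_type]
  refine Finset.sum_congr rfl fun y _ => ?_
  simp only [Matrix.mul_apply, Fintype.sum_prod_type (α₁ := ιA₁ × ιA₂) (α₂ := ιR),
    Matrix.kroneckerMap_apply, Matrix.conjTranspose_apply, Matrix.one_apply]
  rw [Finset.sum_eq_single s]
  · simp [blk]
  · intro b _ hb
    simp [Ne.symm hb]
  · simp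

theorem conjY_sum {n κ : Type} [Fintype n] [DecidableEq n] [Fintype κ] (M : κ → Matrix n n ℂ)
    (U : Matrix.unitaryGroup n ℂ) : conjY (∑ k, M k) U = ∑ k, conjY (M k) U := by
  simp [conjY, Finset.mul_sum, Finset.sum_mul]

theorem conjY_sub {n : Type} [Fintype n] [DecidableEq n] (M N : Matrix n n ℂ)
    (U : Matrix.unitaryGroup n ℂ) : conjY (M - N) U = conjY M U - conjY N U := by
  simp [conjY, mul_sub, sub_mul]

theorem conjY_smul {n : Type} [Fintype n] [DecidableEq n] (c : ℂ) (M : Matrix n n ℂ)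
    (U : Matrix.unitaryGroup n ℂ) : conjY (c • M) U = c • conjY M U := by
  simp [conjY]

theorem ptrSnd_eq {α ρ : Type} [Fintype ρ] (ψ : Matrix (α × ρ) (α × ρ) ℂ) :
    ptrSnd ψ = ∑ r, blk ψ r r := by
  ext x y
  simp [ptrSnd, blk, Matrix.sum_apply]

theorem ptrSnd_sigma (ψ : Matrix ((ιA₁ × ιA₂) × ιR) ((ιA₁ × ιA₂) × ιR) ℂ)
    (U : Matrix.unitaryGroup (ιA₁ × ιA₂) ℂ) (p q : ιA₂) :
    ptrSnd (sigmaA2R ψ (U : Matrix (ιA₁ × ιA₂) (ιA₁ × ιA₂) ℂ)) p q =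
      ∑ a, conjY (ptrSnd ψ) U (a, p) (a, q) := by
  simp only [ptrSnd_eq ψ, conjY_sum, Matrix.sum_apply]
  rw [Finset.sum_comm]
  simp only [ptrSnd, Matrix.of_apply, sigma_apply]

theorem ptrFst_sigma (ψ : Matrix ((ιA₁ × ιA₂) × ιR) ((ιA₁ × ιA₂) × ιR) ℂ)
    (U : Matrix.unitaryGroup (ιA₁ × ιA₂) ℂ) :
    ptrFst (sigmaA2R ψ (U : Matrix (ιA₁ × ιA₂) (ιA₁ × ιA₂) ℂ)) = ptrFst ψ := by
  ext r s
  have h := conjY_trace (blk ψ r s) U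
  simp only [ptrFst, Matrix.of_apply, sigma_apply]
  rw [Finset.sum_comm, ← Fintype.sum_prod_type' (fun a p => conjY (blk ψ r s) U (a, p) (a, p))]
  exact h

/-- the traceless part -/
noncomputable def XX {α ρ : Type} [Fintype α] [Fintype ρ] (ψ : Matrix (α × ρ) (α × ρ) ℂ) :
    Matrix (α × ρ) (α × ρ) ℂ := ψ - ptrSnd ψ ⊗ₖ ptrFst ψ

theorem diff_apply (ψ : Matrix ((ιA₁ × ιA₂) × ιR) ((ιA₁ × ιA₂) × ιR) ℂ)
    (U : Matrix.unitaryGroup (ιA₁ × ιA₂) ℂ) (p q : ιA₂) (r s : ιR) :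
    (sigmaA2R ψ (U : Matrix (ιA₁ × ιA₂) (ιA₁ × ιA₂) ℂ)
            - ptrSnd (sigmaA2R ψ U) ⊗ₖ ptrFst (sigmaA2R ψ U)) (p, r) (q, s) =
      ∑ a, conjY (blk (XX ψ) r s) U (a, p) (a, q) := by
  have hb : blk (XX ψ) r s = blk ψ r s - ptrFst ψ r s • ptrSnd ψ := by
    ext x y
    simp [blk, XX, mul_comm]
  rw [Matrix.sub_apply, sigma_apply, Matrix.kroneckerMap_apply, ptrSnd_sigma, ptrFst_sigma, hb,
    conjY_sub, conjY_smul]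
  simp only [Matrix.sub_apply, Matrix.smul_apply, smul_eq_mul, Finset.sum_sub_distrib,
    ← Finset.mul_sum]
  ring

theorem blk_trace {α ρ : Type} [Fintype α] [Fintype ρ] (ψ : Matrix (α × ρ) (α × ρ) ℂ)
    (h : ψ.trace = 1) (r s : ρ) : (blk (XX ψ) r s).trace = 0 := by
  have h1 : (ptrSnd ψ).trace = 1 := by
    rw [← h]
    simp [Matrix.trace, ptrSnd, Fintype.sum_prod_type]
  have h2 : (blk (XX ψ) r s).trace = ptrFst ψ r s - (ptrSnd ψ).trace * ptrFst ψ r s := by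
    simp [Matrix.trace, blk, XX, Finset.sum_sub_distrib, Finset.sum_mul, ptrFst]
  rw [h2, h1]; ring

theorem blk_norm {α ρ : Type} [Fintype α] [Fintype ρ] (X : Matrix (α × ρ) (α × ρ) ℂ) :
    ∑ r, ∑ s, (blk X r s * (blk X r s)ᴴ).trace = (X * Xᴴ).trace := by
  simp only [Matrix.trace, Matrix.diag_apply, Matrix.mul_apply, Matrix.conjTranspose_apply, blk,
    Matrix.of_apply]
  conv_rhs => rw [Fintype.sum_prod_type, Finset.sum_comm]
  refine Finset.sum_congr rfl fun r _ => ?_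
  conv_lhs => rw [Finset.sum_comm]
  refine Finset.sum_congr rfl fun x _ => ?_
  conv_rhs => rw [Fintype.sum_prod_type, Finset.sum_comm]

theorem XX_norm {α ρ : Type} [Fintype α] [Fintype ρ] [DecidableEq α] [DecidableEq ρ]
    (ψ : Matrix (α × ρ) (α × ρ) ℂ) (h : ψ.IsHermitian) :
    (XX ψ * (XX ψ)ᴴ).trace.re = (ψ * ψ).trace.re
            - 2 * (ψ * (ptrSnd ψ ⊗ₖ ptrFst ψ)).trace.re
            + ((ptrSnd ψ * ptrSnd ψ).trace.re) * ((ptrFst ψ * ptrFst ψ).trace.re) := by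
  have hS : (ptrSnd ψ)ᴴ = ptrSnd ψ := by
    ext x y
    simp only [ptrSnd, Matrix.conjTranspose_apply, Matrix.of_apply, star_sum]
    exact Finset.sum_congr rfl fun r _ => h.apply _ _
  have hF : (ptrFst ψ)ᴴ = ptrFst ψ := by
    ext x y
    simp only [ptrFst, Matrix.conjTranspose_apply, Matrix.of_apply, star_sum]
    exact Finset.sum_congr rfl fun r _ => h.apply _ _
  have him : (ptrSnd ψ * ptrSnd ψ).trace.im = 0 := by
    have : star (ptrSnd ψ * ptrSnd ψ).trace = (ptrSnd ψ * ptrSnd ψ).trace := by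
      rw [← Matrix.trace_conjTranspose, Matrix.conjTranspose_mul, hS]
    exact Complex.conj_eq_iff_im.1 this
  have hX : (XX ψ)ᴴ = XX ψ := by
    rw [XX, Matrix.conjTranspose_sub, Matrix.conjTranspose_kronecker, hS, hF, h.eq]
  rw [hX, XX, mul_sub, sub_mul, sub_mul, ← Matrix.mul_kronecker_mul]
  simp only [Matrix.trace_sub, Matrix.trace_kronecker, Complex.sub_re, Complex.mul_re, him]
  rw [Matrix.trace_mul_comm (ptrSnd ψ ⊗ₖ ptrFst ψ) ψ]
  ring

theorem hs_eq {m : Type} [Fintype m] (X : Matrix m m ℂ) :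
    hsNormSq X = (∑ i, ∑ j, X i j * star (X i j)).re := by
  rw [hsNormSq, Finset.sum_comm]
  simp [Matrix.trace, Matrix.mul_apply, mul_comm]

end Red

/-- **Lemma 4.** -/
theorem hs_decoupling_exact
    {ιA₁ ιA₂ ιR : Type} [Fintype ιA₁] [DecidableEq ιA₁] [Fintype ιA₂] [DecidableEq ιA₂]
    [Fintype ιR] [DecidableEq ιR]
    (hdA : 2 ≤ Fintype.card ιA₁ * Fintype.card ιA₂)
    (ψ : Matrix ((ιA₁ × ιA₂) × ιR) ((ιA₁ × ιA₂) × ιR) ℂ)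
    (hψ : ψ.PosSemidef) (hψtr : ψ.trace = 1)
    (μ : Measure (Matrix.unitaryGroup (ιA₁ × ιA₂) ℂ)) [IsProbabilityMeasure μ]
    (hμ : ∀ V : Matrix.unitaryGroup (ιA₁ × ιA₂) ℂ,
      μ.map (fun U : Matrix.unitaryGroup (ιA₁ × ιA₂) ℂ => V * U) = μ) :
    (∫ U : Matrix.unitaryGroup (ιA₁ × ιA₂) ℂ,
        hsNormSq (sigmaA2R ψ (U : Matrix (ιA₁ × ιA₂) (ιA₁ × ιA₂) ℂ)
            - ptrSnd (sigmaA2R ψ U) ⊗ₖ ptrFst (sigmaA2R ψ U)) ∂μ)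
      = (((Fintype.card ιA₁ : ℝ) * (Fintype.card ιA₂ : ℝ) ^ 2 - (Fintype.card ιA₁ : ℝ)) /
            (((Fintype.card ιA₁ : ℝ) * (Fintype.card ιA₂ : ℝ)) ^ 2 - 1))
        * ((ψ * ψ).trace.re
            - 2 * (ψ * (ptrSnd ψ ⊗ₖ ptrFst ψ)).trace.re
            + ((ptrSnd ψ * ptrSnd ψ).trace.re) * ((ptrFst ψ * ptrFst ψ).trace.re)) := by
  have hd : 2 ≤ Fintype.card (ιA₁ × ιA₂) := by rwa [Fintype.card_prod]
  rw [← XX_norm ψ hψ.1]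
  have hpt : ∀ r s p q,
      Integrable (fun U => (∑ a, conjY (blk (XX ψ) r s) U (a, p) (a, q)) *
        star (∑ a, conjY (blk (XX ψ) r s) U (a, p) (a, q))) μ ∧
      ∫ U, (∑ a, conjY (blk (XX ψ) r s) U (a, p) (a, q)) *
        star (∑ a, conjY (blk (XX ψ) r s) U (a, p) (a, q)) ∂μ =
        ∑ a, ∑ b, GG μ (blk (XX ψ) r s) (a, p) (a, q) (b, p) (b, q) := by
    intro r s p q
    have := GG_lin μ (blk (XX ψ) r s) (fun _ : ιA₁ => 1) (fun a => (a, p)) (fun a => (a, q))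
    simpa only [one_mul, star_one] using this
  have hI : ∀ p q r s, Integrable (fun U => (∑ a, conjY (blk (XX ψ) r s) U (a, p) (a, q)) *
        star (∑ a, conjY (blk (XX ψ) r s) U (a, p) (a, q))) μ := fun p q r s => (hpt r s p q).1
  simp only [hs_eq, Fintype.sum_prod_type (α₁ := ιA₂) (α₂ := ιR), diff_apply]
  have hre : ∀ f : Matrix.unitaryGroup (ιA₁ × ιA₂) ℂ → ℂ, Integrable f μ →
      ∫ U, (f U).re ∂μ = (∫ U, f U ∂μ).re := fun f hf => integral_re hf
  rw [hre _ (integrable_finsetSum _ fun p _ => integrable_finsetSum _ fun r _ =>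
    integrable_finsetSum _ fun q _ => integrable_finsetSum _ fun s _ => hI p q r s)]
  rw [integral_finsetSum _ (fun p _ => integrable_finsetSum _ fun r _ =>
    integrable_finsetSum _ fun q _ => integrable_finsetSum _ fun s _ => hI p q r s)]
  have step : ∀ p, ∫ U, ∑ r, ∑ q, ∑ s, (∑ a, conjY (blk (XX ψ) r s) U (a, p) (a, q)) *
        star (∑ a, conjY (blk (XX ψ) r s) U (a, p) (a, q)) ∂μ =
      ∑ r, ∑ q, ∑ s, ∑ a, ∑ b, GG μ (blk (XX ψ) r s) (a, p) (a, q) (b, p) (b, q) := by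
    intro p
    rw [integral_finsetSum _ fun r _ =>
      integrable_finsetSum _ fun q _ => integrable_finsetSum _ fun s _ => hI p q r s]
    refine Finset.sum_congr rfl fun r _ => ?_
    rw [integral_finsetSum _ fun q _ => integrable_finsetSum _ fun s _ => hI p q r s]
    refine Finset.sum_congr rfl fun q _ => ?_
    rw [integral_finsetSum _ fun s _ => hI p q r s]
    exact Finset.sum_congr rfl fun s _ => (hpt r s p q).2
  simp only [step, GG_val μ hμ _ hd (blk_trace ψ hψtr _ _)]
  have hfin : (∑ p : ιA₂, ∑ r, ∑ q : ιA₂, ∑ s, ∑ a : ιA₁, ∑ b : ιA₁,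
      (blk (XX ψ) r s * (blk (XX ψ) r s)ᴴ).trace / ((Fintype.card (ιA₁ × ιA₂) : ℂ) ^ 2 - 1) *
      (((if (a, p) = (b, p) then 1 else 0) * (if (a, q) = (b, q) then 1 else 0)) -
      ((if (a, p) = (a, q) then 1 else 0) * (if (b, p) = (b, q) then 1 else 0)) /
        (Fintype.card (ιA₁ × ιA₂) : ℂ))) =
      ((((Fintype.card ιA₁ : ℝ) * (Fintype.card ιA₂ : ℝ) ^ 2 - (Fintype.card ιA₁ : ℝ)) /
            (((Fintype.card ιA₁ : ℝ) * (Fintype.card ιA₂ : ℝ)) ^ 2 - 1) : ℝ) : ℂ) *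
        (XX ψ * (XX ψ)ᴴ).trace := by
    have h1 : (Fintype.card ιA₁ : ℂ) ≠ 0 := by
      have : Fintype.card ιA₁ ≠ 0 := by rintro h; simp [h] at hdA
      exact_mod_cast this
    have h2 : (Fintype.card ιA₂ : ℂ) ≠ 0 := by
      have : Fintype.card ιA₂ ≠ 0 := by rintro h; simp [h] at hdA
      exact_mod_cast this
    have inner : ∀ p q : ιA₂, ∀ t : ℂ, ∑ a : ιA₁, ∑ b : ιA₁, t *
      (((if (a, p) = (b, p) then 1 else 0) * (if (a, q) = (b, q) then 1 else 0)) -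
      ((if (a, p) = (a, q) then 1 else 0) * (if (b, p) = (b, q) then 1 else 0)) /
        (Fintype.card (ιA₁ × ιA₂) : ℂ)) = t * ((Fintype.card ιA₁ : ℂ) -
          (if p = q then (Fintype.card ιA₁ : ℂ) / (Fintype.card ιA₂ : ℂ) else 0)) := by
      intro p q t
      simp only [← Finset.mul_sum]
      congr 1
      by_cases h : p = q
      · subst h
        simp [Finset.sum_sub_distrib]
        field_simp
      · simp [h, Finset.sum_sub_distrib]
    simp only [inner]
    have swap : ∀ (T : ιR → ιR → ℂ) (W : ιA₂ → ιA₂ → ℂ), ∑ p, ∑ r, ∑ q, ∑ s, T r s * W p q =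
        (∑ r, ∑ s, T r s) * ∑ p, ∑ q, W p q := by
      intro T W
      rw [Finset.sum_mul_sum, Finset.sum_comm]
      refine Finset.sum_congr rfl fun r _ => Finset.sum_congr rfl fun p _ => ?_
      rw [Finset.sum_mul_sum, Finset.sum_comm]
    rw [swap (fun r s => (blk (XX ψ) r s * (blk (XX ψ) r s)ᴴ).trace /
      ((Fintype.card (ιA₁ × ιA₂) : ℂ) ^ 2 - 1))]
    simp only [← Finset.sum_div, blk_norm]
    simp [Finset.sum_sub_distrib]
    field_simp
  rw [hfin, Complex.re_ofReal_mul]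
end

section
/- Let ψ^{AR} be a density operator on A⊗R with A = A₁⊗A₂ and d_A ≥ 2. Then ∫_{U(A)} Tr[ (σ^{A₂R}(U))² ] dU = ((p+q)/2) Tr[(ψ^R)²] + ((p−q)/2) Tr[(ψ^{AR})²], where p = (d_{A₁}+d_{A₂})/(d_A+1) and q = (d_{A₁}−d_{A₂})/(d_A−1). -/
open Matrix MeasureTheory
open scoped Kronecker ComplexOrder

namespace HaarPur

/-- Tensor invariance. -/
def Inv {n : Type} [Fintype n] [DecidableEq n] (T : n → n → n → n → ℂ) : Prop :=
  ∀ V ∈ Matrix.unitaryGroup n ℂ, ∀ a b c d, T a b c d =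
    ∑ a', V a a' * ∑ b', star (V b b') * ∑ c', V c c' * ∑ d', star (V d d') * T a' b' c' d'

lemma diag_inv {n : Type} [Fintype n] [DecidableEq n] {T : n → n → n → n → ℂ} (h : Inv T)
    (v : n → ℂ) (hv : ∀ i, v i * star (v i) = 1) (a b c d : n) :
    T a b c d = v a * (star (v b) * (v c * (star (v d) * T a b c d))) := by
  have hV : Matrix.diagonal v ∈ Matrix.unitaryGroup n ℂ := by
    rw [Matrix.mem_unitaryGroup_iff, Matrix.star_eq_conjTranspose, Matrix.diagonal_conjTranspose,
      Matrix.diagonal_mul_diagonal, ← Matrix.diagonal_one]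
    congr 1
    funext i
    exact hv i
  have := h _ hV a b c d
  simpa [Matrix.diagonal_apply, apply_ite, ite_mul] using this

lemma perm_inv {n : Type} [Fintype n] [DecidableEq n] {T : n → n → n → n → ℂ} (h : Inv T)
    (σ : Equiv.Perm n) (a b c d : n) :
    T a b c d = T (σ a) (σ b) (σ c) (σ d) := by
  have hV : (Matrix.of fun i j => if σ i = j then (1:ℂ) else 0) ∈ Matrix.unitaryGroup n ℂ := by
    rw [Matrix.mem_unitaryGroup_iff]
    ext i j
    simp [Matrix.mul_apply, Matrix.star_apply, Matrix.one_apply, apply_ite star, eq_comm]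
  have := h _ hV a b c d
  simpa [apply_ite star, ite_mul] using this

lemma refl_sum {n : Type} [Fintype n] [DecidableEq n] (x y : n) (hxy : x ≠ y) :
    ∃ V ∈ Matrix.unitaryGroup n ℂ, (∀ f : n → ℂ, ∑ j, V x j * f j = 3/5 * f x + 4/5 * f y) ∧
      (∀ f : n → ℂ, ∑ j, star (V x j) * f j = 3/5 * f x + 4/5 * f y) := by
  let w : n → ℂ := fun i => (if i = x then 1 else 0) - 2 * (if i = y then 1 else 0)
  have hw : ∑ i, w i * w i = 5 := by
    simp only [w, sub_mul, mul_sub, Finset.sum_sub_distrib, ite_mul, mul_ite, mul_one, mul_zero, zero_mul, one_mul]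
    simp [hxy, hxy.symm]
    norm_num
  have hsw : ∀ i, star (w i) = w i := by
    intro i; simp only [w]; split_ifs <;> simp
  let V : Matrix n n ℂ := Matrix.of fun i j => (if i = j then 1 else 0) - 2/5 * (w i * w j)
  have hsV : ∀ i j, star (V i j) = V i j := by
    intro i j
    have h1 : (starRingEnd ℂ) (w i) = w i := hsw i
    have h2 : (starRingEnd ℂ) (w j) = w j := hsw j
    simp [V, apply_ite, h1, h2]
  have hx : ∀ f : n → ℂ, ∑ j, V x j * f j = 3/5 * f x + 4/5 * f y := by
    intro f
    simp only [V, w, Matrix.of_apply, sub_mul, mul_sub, Finset.sum_sub_distrib, ite_mul, mul_ite, mul_one, mul_zero, zero_mul, one_mul]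
    simp [hxy]
    ring
  refine ⟨V, ?_, hx, by simpa only [hsV] using hx⟩
  rw [Matrix.mem_unitaryGroup_iff]
  ext i j
  simp only [Matrix.mul_apply, Matrix.star_apply, hsV]
  have : ∀ k, V i k * V j k = (if i = k then (if j = k then 1 else 0) else 0)
      - 2/5 * w j * (if i = k then w k else 0) - 2/5 * w i * (if j = k then w k else 0)
      + 4/25 * w i * w j * (w k * w k) := by
    intro k
    simp only [V, Matrix.of_apply]
    split_ifs <;> ring
  simp only [this, Finset.sum_add_distrib, Finset.sum_sub_distrib, ← Finset.mul_sum, hw]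
  simp [Matrix.one_apply, eq_comm]
  ring

lemma structure_inv {n : Type} [Fintype n] [DecidableEq n] {T : n → n → n → n → ℂ} (h : Inv T)
    (x y : n) (hxy : x ≠ y) : ∃ α β : ℂ, ∀ a b c d, T a b c d =
      α * ((if a = b then 1 else 0) * (if c = d then 1 else 0))
      + β * ((if a = d then 1 else 0) * (if c = b then 1 else 0)) := by
  have hz : ∀ a b c d, ¬ (a = b ∧ c = d) → ¬ (a = d ∧ c = b) → T a b c d = 0 := by
    intro a b c d h1 h2
    have key : ∀ z : n, ∃ k : ℂ, k = (if a = z then Complex.I else 1) * ((if b = z then -Complex.I else 1) *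
        ((if c = z then Complex.I else 1) * (if d = z then -Complex.I else 1))) ∧
        (k - 1) * T a b c d = 0 := by
      intro z
      refine ⟨_, rfl, ?_⟩
      have := diag_inv h (fun i => if i = z then Complex.I else 1)
        (by intro i; split_ifs <;> simp) a b c d
      simp only [apply_ite star, star_one, Complex.star_def, Complex.conj_I] at this
      linear_combination -this
    have hne : Complex.I - 1 ≠ 0 := by
      intro h; have := congrArg Complex.re h; simp at this
    have hne' : -Complex.I - 1 ≠ 0 := by
      intro h; have := congrArg Complex.re h; simp at this
    have hne2 : (-1 : ℂ) - 1 ≠ 0 := by norm_num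
    by_contra hT
    have key2 : ∀ z : n, (if a = z then Complex.I else 1) * ((if b = z then -Complex.I else 1) *
        ((if c = z then Complex.I else 1) * (if d = z then -Complex.I else 1))) = 1 := by
      intro z
      obtain ⟨k, rfl, hk⟩ := key z
      rcases mul_eq_zero.1 hk with h | h
      · linear_combination h
      · exact absurd h hT
    have e1 : Complex.I ≠ 1 := fun h => hne (by rw [h]; ring)
    have e2 : -Complex.I ≠ 1 := fun h => hne' (by rw [h]; ring)
    have e3 : (-1:ℂ) ≠ 1 := by norm_num
    have ka := key2 a
    have kc := key2 c
    by_cases hab : a = b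
    · subst hab
      have hcd : c ≠ d := fun h => h1 ⟨rfl, h⟩
      by_cases hac : a = c
      · subst hac
        simp [hcd.symm, e1] at ka
      · simp [hcd.symm, hac, e1] at kc
    · by_cases had : a = d
      · subst had
        have hcb : c ≠ b := fun h => h2 ⟨rfl, h⟩
        by_cases hac : a = c
        · subst hac
          simp [hcb.symm, e1] at ka
        · simp [hcb.symm, hac, e1] at kc
      · by_cases hac : a = c
        · subst hac
          simp [Ne.symm hab, Ne.symm had] at ka
          norm_num at ka
        · simp [Ne.symm hab, Ne.symm had, Ne.symm hac, e1] at ka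
  have hperm : ∀ a c : n, a ≠ c → ∃ σ : Equiv.Perm n, σ a = x ∧ σ c = y := by
    intro a c hac
    refine ⟨(Equiv.swap a x).trans (Equiv.swap (Equiv.swap a x c) y), ?_, ?_⟩
    · have : x ≠ Equiv.swap a x c := by
        intro h
        apply hac
        apply (Equiv.swap a x).injective
        simpa using h
      simp [Equiv.swap_apply_of_ne_of_ne this hxy]
    · simp
  have hα : ∀ a c, a ≠ c → T a a c c = T x x y y := by
    intro a c hac
    obtain ⟨σ, h1, h2⟩ := hperm a c hac
    rw [perm_inv h σ, h1, h2]
  have hβ : ∀ a c, a ≠ c → T a c c a = T x y y x := by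
    intro a c hac
    obtain ⟨σ, h1, h2⟩ := hperm a c hac
    rw [perm_inv h σ, h1, h2]
  have hγ : ∀ a, T a a a a = T x x x x := by
    intro a
    rw [perm_inv h (Equiv.swap a x)]
    simp
  have hrel : T x x x x = T x x y y + T x y y x := by
    obtain ⟨V, hV, f1, f2⟩ := refl_sum x y hxy
    have := h V hV x x x x
    simp only [f1, f2] at this
    rw [hγ y, hα y x hxy.symm, hβ y x hxy.symm, hz x x x y (by simp [hxy]) (by simp [hxy]),
      hz x x y x (by simp [hxy.symm]) (by simp [hxy.symm]),
      hz x y x x (by simp [hxy]) (by simp [hxy]),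
      hz y x x x (by simp [hxy.symm]) (by simp [hxy.symm]),
      hz x y x y (by simp [hxy]) (by simp [hxy]),
      hz y x y x (by simp [hxy.symm]) (by simp [hxy.symm]),
      hz x y y y (by simp [hxy]) (by simp [hxy]),
      hz y x y y (by simp [hxy.symm]) (by simp [hxy.symm]),
      hz y y x y (by simp [hxy]) (by simp [hxy]),
      hz y y y x (by simp [hxy.symm]) (by simp [hxy.symm])] at this
    linear_combination 625/288 * this
  refine ⟨T x x y y, T x y y x, ?_⟩
  intro a b c d
  by_cases h1 : a = b ∧ c = d
  · obtain ⟨rfl, rfl⟩ := h1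
    by_cases hac : a = c
    · subst hac; simp [hγ, hrel]
    · simp [hac, hα a c hac]
  · by_cases h2 : a = d ∧ c = b
    · obtain ⟨rfl, rfl⟩ := h2
      have hac : a ≠ c := fun h => h1 ⟨h, h.symm⟩
      simp [hac, hβ a c hac]
    · rw [hz a b c d h1 h2]
      have : (if a = b then (1:ℂ) else 0) * (if c = d then 1 else 0) = 0 := by
        by_cases hab : a = b <;> simp_all
      have h' : (if a = d then (1:ℂ) else 0) * (if c = b then 1 else 0) = 0 := by
        by_cases hab : a = d <;> simp_all
      rw [this, h']; simp

/-- Blocks. -/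
def blk {n R : Type} (ψ : Matrix (n × R) (n × R) ℂ) (r s : R) : Matrix n n ℂ :=
  Matrix.of fun c d => ψ (c, r) (d, s)

/-- The integrand tensor. -/
noncomputable def G {n R : Type} [Fintype n] [Fintype R] (ψ : Matrix (n × R) (n × R) ℂ)
    (a b c d : n) (U : Matrix n n ℂ) : ℂ :=
  ∑ r, ∑ s, (U * blk ψ r s * Uᴴ) a b * (U * blk ψ s r * Uᴴ) c d

lemma conj_entry {n : Type} [Fintype n] (V X : Matrix n n ℂ) (a b : n) :
    (V * X * Vᴴ) a b = ∑ a', V a a' * ∑ b', star (V b b') * X a' b' := by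
  rw [Matrix.mul_assoc, Matrix.mul_apply]
  refine Finset.sum_congr rfl fun i _ => ?_
  rw [Matrix.mul_apply]
  congr 1
  refine Finset.sum_congr rfl fun j _ => ?_
  rw [Matrix.conjTranspose_apply, mul_comm]

lemma G_mul {n R : Type} [Fintype n] [Fintype R] (ψ : Matrix (n × R) (n × R) ℂ)
    (V U : Matrix n n ℂ) (a b c d : n) :
    G ψ a b c d (V * U) = ∑ a', V a a' * ∑ b', star (V b b') * ∑ c', V c c' *
      ∑ d', star (V d d') * G ψ a' b' c' d' U := by
  have e : ∀ r s, (V * U) * blk ψ r s * (V * U)ᴴ = V * (U * blk ψ r s * Uᴴ) * Vᴴ := by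
    intro r s; simp only [Matrix.conjTranspose_mul, Matrix.mul_assoc]
  simp only [G, e]
  have h1 : ∀ (v f : n → ℂ) (q : ℂ), (∑ i, v i * f i) * q = ∑ i, v i * (f i * q) := by
    intro v f q; simp only [Finset.sum_mul, mul_assoc]
  have h2 : ∀ (v f : n → ℂ) (q : ℂ), q * (∑ i, v i * f i) = ∑ i, v i * (q * f i) := by
    intro v f q; simp only [Finset.mul_sum, mul_left_comm]
  have h3 : ∀ (v : n → ℂ) (f : R → n → ℂ), ∑ r, ∑ i, v i * f r i = ∑ i, v i * ∑ r, f r i := by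
    intro v f; rw [Finset.sum_comm]; simp only [Finset.mul_sum]
  have h4 : ∀ X Y : Matrix n n ℂ, (V * X * Vᴴ) a b * (V * Y * Vᴴ) c d =
      ∑ a', V a a' * ∑ b', star (V b b') * ∑ c', V c c' *
      ∑ d', star (V d d') * (X a' b' * Y c' d') := by
    intro X Y
    rw [conj_entry, conj_entry, h1]
    refine Finset.sum_congr rfl fun a' _ => ?_
    rw [h1]
    congr 1
    refine Finset.sum_congr rfl fun b' _ => ?_
    rw [h2]
    congr 1
    refine Finset.sum_congr rfl fun c' _ => ?_
    rw [h2]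
  simp only [h4, h3]

lemma G_tr1 {n R : Type} [Fintype n] [DecidableEq n] [Fintype R] (ψ : Matrix (n × R) (n × R) ℂ)
    (U : Matrix n n ℂ) (hU : Uᴴ * U = 1) :
    ∑ a, ∑ c, G ψ a a c c U = (ptrFst ψ * ptrFst ψ).trace := by
  have h1 : ∀ r s, ∑ a, (U * blk ψ r s * Uᴴ) a a = ∑ a, ψ (a, r) (a, s) := by
    intro r s
    change Matrix.trace (U * blk ψ r s * Uᴴ) = Matrix.trace (blk ψ r s)
    rw [Matrix.trace_mul_comm, ← Matrix.mul_assoc, hU, Matrix.one_mul]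
  have : ∑ a, ∑ c, G ψ a a c c U = ∑ r, ∑ s, (∑ a, (U * blk ψ r s * Uᴴ) a a) *
      (∑ c, (U * blk ψ s r * Uᴴ) c c) := by
    simp only [G, Finset.sum_mul_sum]
    simp only [Finset.sum_comm (s := (Finset.univ : Finset n)) (t := (Finset.univ : Finset R))]
  rw [this]
  simp only [h1]
  simp only [Matrix.trace, Matrix.diag, Matrix.mul_apply, ptrFst, Matrix.of_apply]

lemma G_tr2 {n R : Type} [Fintype n] [DecidableEq n] [Fintype R] (ψ : Matrix (n × R) (n × R) ℂ)
    (U : Matrix n n ℂ) (hU : Uᴴ * U = 1) :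
    ∑ a, ∑ c, G ψ a c c a U = (ψ * ψ).trace := by
  have : ∑ a, ∑ c, G ψ a c c a U = ∑ r, ∑ s, ((U * blk ψ r s * Uᴴ) * (U * blk ψ s r * Uᴴ)).trace := by
    simp only [G, Matrix.trace, Matrix.diag, Matrix.mul_apply (M := (U * blk ψ _ _ * Uᴴ))]
    simp only [Finset.sum_comm (s := (Finset.univ : Finset n)) (t := (Finset.univ : Finset R))]
  rw [this]
  have h1 : ∀ r s, ((U * blk ψ r s * Uᴴ) * (U * blk ψ s r * Uᴴ)).trace
      = (blk ψ r s * blk ψ s r).trace := by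
    intro r s
    have : (U * blk ψ r s * Uᴴ) * (U * blk ψ s r * Uᴴ) = U * ((blk ψ r s * blk ψ s r) * Uᴴ) := by
      calc _ = U * blk ψ r s * (Uᴴ * U) * (blk ψ s r * Uᴴ) := by simp only [Matrix.mul_assoc]
        _ = _ := by rw [hU]; simp only [Matrix.mul_assoc, Matrix.one_mul]
    rw [this, Matrix.trace_mul_comm, Matrix.mul_assoc, hU, Matrix.mul_one]
  simp only [h1]
  simp only [Matrix.trace, Matrix.diag, Matrix.mul_apply, blk, Matrix.of_apply,
    Fintype.sum_prod_type]
  simp only [Finset.sum_comm (s := (Finset.univ : Finset n)) (t := (Finset.univ : Finset R))]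

lemma memLp_entry {n : Type} [Fintype n] [DecidableEq n]
    (μ : Measure (Matrix.unitaryGroup n ℂ)) [IsProbabilityMeasure μ] (a b : n) :
    MemLp (fun U : Matrix.unitaryGroup n ℂ => (U : Matrix n n ℂ) a b) ⊤ μ := by
  refine memLp_top_of_bound (C := 1) ?_ ?_
  · apply Measurable.aestronglyMeasurable
    have h1 : Measurable (fun M : n → n → ℂ => M a b) := by fun_prop
    exact h1.comp measurable_subtype_coe
  · exact Filter.Eventually.of_forall fun U => entry_norm_bound_of_unitary U.2 a b

lemma memLp_conj {n : Type} [Fintype n] [DecidableEq n]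
    (μ : Measure (Matrix.unitaryGroup n ℂ)) [IsProbabilityMeasure μ] (X : Matrix n n ℂ) (a b : n) :
    MemLp (fun U : Matrix.unitaryGroup n ℂ => ((U : Matrix n n ℂ) * X * (U : Matrix n n ℂ)ᴴ) a b) ⊤ μ := by
  simp only [conj_entry]
  refine memLp_finsetSum _ fun i _ => ?_
  refine MemLp.mul (p := ⊤) (q := ⊤) ?_ (memLp_entry μ a i)
  refine memLp_finsetSum _ fun j _ => ?_
  exact ((memLp_entry μ b j).star).mul_const (X i j)

lemma integrable_G {n R : Type} [Fintype n] [DecidableEq n] [Fintype R] (ψ : Matrix (n × R) (n × R) ℂ)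
    (μ : Measure (Matrix.unitaryGroup n ℂ)) [IsProbabilityMeasure μ] (a b c d : n) :
    Integrable (fun U : Matrix.unitaryGroup n ℂ => G ψ a b c d (U : Matrix n n ℂ)) μ := by
  have : MemLp (fun U : Matrix.unitaryGroup n ℂ => G ψ a b c d (U : Matrix n n ℂ)) ⊤ μ := by
    unfold G
    refine memLp_finsetSum _ fun r _ => memLp_finsetSum _ fun s _ => ?_
    exact MemLp.mul (p := ⊤) (q := ⊤) (memLp_conj μ _ c d) (memLp_conj μ _ a b)
  exact this.integrable le_top

lemma inv_G {n R : Type} [Fintype n] [DecidableEq n] [Fintype R] (ψ : Matrix (n × R) (n × R) ℂ)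
    (μ : Measure (Matrix.unitaryGroup n ℂ)) [IsProbabilityMeasure μ]
    (hμ : ∀ V : Matrix.unitaryGroup n ℂ,
      μ.map (fun U : Matrix.unitaryGroup n ℂ => V * U) = μ) :
    Inv (fun a b c d => ∫ U : Matrix.unitaryGroup n ℂ, G ψ a b c d (U : Matrix n n ℂ) ∂μ) := by
  intro V hV a b c d
  have hm : AEMeasurable (fun U : Matrix.unitaryGroup n ℂ => (⟨V, hV⟩ : Matrix.unitaryGroup n ℂ) * U) μ := by
    by_contra hc
    have := hμ ⟨V, hV⟩
    rw [Measure.map_of_not_aemeasurable hc] at this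
    exact IsProbabilityMeasure.ne_zero μ this.symm
  have h1 : ∫ U : Matrix.unitaryGroup n ℂ, G ψ a b c d (U : Matrix n n ℂ) ∂μ
      = ∫ U : Matrix.unitaryGroup n ℂ, G ψ a b c d (V * (U : Matrix n n ℂ)) ∂μ := by
    conv_lhs => rw [← hμ ⟨V, hV⟩]
    rw [integral_map hm]
    · rfl
    · rw [hμ]; exact (integrable_G ψ μ a b c d).aestronglyMeasurable
  dsimp only
  rw [h1]
  simp only [G_mul]
  have i4 := fun a' b' c' d' => (integrable_G ψ μ a' b' c' d').const_mul (star (V d d'))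
  have i3 := fun a' b' c' => (integrable_finsetSum Finset.univ fun d' _ => i4 a' b' c' d').const_mul (V c c')
  have i2 := fun a' b' => (integrable_finsetSum Finset.univ fun c' _ => i3 a' b' c').const_mul (star (V b b'))
  have i1 := fun a' => (integrable_finsetSum Finset.univ fun b' _ => i2 a' b').const_mul (V a a')
  rw [integral_finsetSum _ fun a' _ => i1 a']
  refine Finset.sum_congr rfl fun a' _ => ?_
  rw [integral_const_mul, integral_finsetSum _ fun b' _ => i2 a' b']
  congr 1
  refine Finset.sum_congr rfl fun b' _ => ?_
  rw [integral_const_mul, integral_finsetSum _ fun c' _ => i3 a' b' c']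
  congr 1
  refine Finset.sum_congr rfl fun c' _ => ?_
  rw [integral_const_mul, integral_finsetSum _ fun d' _ => i4 a' b' c' d']
  congr 1
  refine Finset.sum_congr rfl fun d' _ => ?_
  rw [integral_const_mul]

lemma kron_entry {n R : Type} [Fintype n] [Fintype R] [DecidableEq R]
    (ψ : Matrix (n × R) (n × R) ℂ) (U : Matrix n n ℂ) (a b : n) (r s : R) :
    ((U ⊗ₖ (1 : Matrix R R ℂ)) * ψ * (U ⊗ₖ (1 : Matrix R R ℂ))ᴴ) (a, r) (b, s)
      = (U * blk ψ r s * Uᴴ) a b := by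
  rw [conj_entry, conj_entry]
  simp only [Fintype.sum_prod_type, Matrix.kroneckerMap_apply, Matrix.one_apply, blk, Matrix.of_apply]
  simp [apply_ite, ite_mul]

lemma sigma_G {ιA₁ ιA₂ ιR : Type} [Fintype ιA₁] [Fintype ιA₂]
    [Fintype ιR] [DecidableEq ιR]
    (ψ : Matrix ((ιA₁ × ιA₂) × ιR) ((ιA₁ × ιA₂) × ιR) ℂ)
    (U : Matrix (ιA₁ × ιA₂) (ιA₁ × ιA₂) ℂ) :
    (sigmaA2R ψ U * sigmaA2R ψ U).trace =
      ∑ a₂, ∑ b₂, ∑ a₁, ∑ b₁, G ψ (a₁, a₂) (a₁, b₂) (b₁, b₂) (b₁, a₂) U := by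
  simp only [Matrix.trace, Matrix.diag]
  simp_rw [Matrix.mul_apply]
  simp only [sigmaA2R, Matrix.of_apply, kron_entry, Fintype.sum_prod_type, Finset.sum_mul_sum, G]
  refine Finset.sum_congr rfl fun a₂ _ => ?_
  rw [Finset.sum_comm]
  refine Finset.sum_congr rfl fun b₂ _ => ?_
  simp only [Finset.sum_comm (s := (Finset.univ : Finset ιA₁)) (t := (Finset.univ : Finset ιR))]

end HaarPur

/-- **Haar average of the purity of `σ^{A₂R}(U)`:**
`∫ Tr[(σ^{A₂R}(U))²] dU = ((p+q)/2) Tr[(ψ^R)²] + ((p−q)/2) Tr[(ψ^{AR})²]`, with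
`p = (d_{A₁}+d_{A₂})/(d_A+1)` and `q = (d_{A₁}−d_{A₂})/(d_A−1)`. -/
theorem average_purity_sigmaA2R
    {ιA₁ ιA₂ ιR : Type} [Fintype ιA₁] [DecidableEq ιA₁] [Fintype ιA₂] [DecidableEq ιA₂]
    [Fintype ιR] [DecidableEq ιR]
    (hdA : 2 ≤ Fintype.card ιA₁ * Fintype.card ιA₂)
    (ψ : Matrix ((ιA₁ × ιA₂) × ιR) ((ιA₁ × ιA₂) × ιR) ℂ)
    (hψ : ψ.PosSemidef) (hψtr : ψ.trace = 1)
    (μ : Measure (Matrix.unitaryGroup (ιA₁ × ιA₂) ℂ)) [IsProbabilityMeasure μ]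
    (hμ : ∀ V : Matrix.unitaryGroup (ιA₁ × ιA₂) ℂ,
      μ.map (fun U : Matrix.unitaryGroup (ιA₁ × ιA₂) ℂ => V * U) = μ) :
    (∫ U : Matrix.unitaryGroup (ιA₁ × ιA₂) ℂ,
        (sigmaA2R ψ (U : Matrix (ιA₁ × ιA₂) (ιA₁ × ιA₂) ℂ)
          * sigmaA2R ψ (U : Matrix (ιA₁ × ιA₂) (ιA₁ × ιA₂) ℂ)).trace ∂μ)
      = ((((Fintype.card ιA₁ : ℂ) + (Fintype.card ιA₂ : ℂ)) /
            ((Fintype.card ιA₁ : ℂ) * (Fintype.card ιA₂ : ℂ) + 1)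
          + ((Fintype.card ιA₁ : ℂ) - (Fintype.card ιA₂ : ℂ)) /
            ((Fintype.card ιA₁ : ℂ) * (Fintype.card ιA₂ : ℂ) - 1)) / 2)
          * (ptrFst ψ * ptrFst ψ).trace
        + ((((Fintype.card ιA₁ : ℂ) + (Fintype.card ιA₂ : ℂ)) /
            ((Fintype.card ιA₁ : ℂ) * (Fintype.card ιA₂ : ℂ) + 1)
          - ((Fintype.card ιA₁ : ℂ) - (Fintype.card ιA₂ : ℂ)) /
            ((Fintype.card ιA₁ : ℂ) * (Fintype.card ιA₂ : ℂ) - 1)) / 2)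
          * (ψ * ψ).trace := by
  classical
  obtain ⟨x, y, hxy⟩ : ∃ x y : ιA₁ × ιA₂, x ≠ y := by
    have : 1 < Fintype.card (ιA₁ × ιA₂) := by rw [Fintype.card_prod]; omega
    exact Fintype.exists_pair_of_one_lt_card this
  have hI := HaarPur.inv_G ψ μ hμ
  obtain ⟨α, β, hT⟩ := HaarPur.structure_inv hI x y hxy
  have hi := HaarPur.integrable_G ψ μ
  have hu : ∀ U : Matrix.unitaryGroup (ιA₁ × ιA₂) ℂ,
      (U : Matrix (ιA₁ × ιA₂) (ιA₁ × ιA₂) ℂ)ᴴ * (U : Matrix (ιA₁ × ιA₂) (ιA₁ × ιA₂) ℂ) = 1 :=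
    fun U => Matrix.mem_unitaryGroup_iff'.1 U.2
  have hX : (ptrFst ψ * ptrFst ψ).trace = ∑ a, ∑ c, ∫ U : Matrix.unitaryGroup (ιA₁ × ιA₂) ℂ,
      HaarPur.G ψ a a c c (U : Matrix (ιA₁ × ιA₂) (ιA₁ × ιA₂) ℂ) ∂μ := by
    simp_rw [← integral_finsetSum _ fun c _ => hi _ _ c c]
    rw [← integral_finsetSum _ fun a _ => integrable_finsetSum _ fun c _ => hi a a c c]
    simp only [HaarPur.G_tr1 ψ _ (hu _)]
    simp
  have hY : (ψ * ψ).trace = ∑ a, ∑ c, ∫ U : Matrix.unitaryGroup (ιA₁ × ιA₂) ℂ,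
      HaarPur.G ψ a c c a (U : Matrix (ιA₁ × ιA₂) (ιA₁ × ιA₂) ℂ) ∂μ := by
    simp_rw [← integral_finsetSum _ fun c _ => hi _ c c _]
    rw [← integral_finsetSum _ fun a _ => integrable_finsetSum _ fun c _ => hi a c c a]
    simp only [HaarPur.G_tr2 ψ _ (hu _)]
    simp
  have hS : (∫ U : Matrix.unitaryGroup (ιA₁ × ιA₂) ℂ,
        (sigmaA2R ψ (U : Matrix (ιA₁ × ιA₂) (ιA₁ × ιA₂) ℂ)
          * sigmaA2R ψ (U : Matrix (ιA₁ × ιA₂) (ιA₁ × ιA₂) ℂ)).trace ∂μ) =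
      ∑ a₂, ∑ b₂, ∑ a₁, ∑ b₁, ∫ U : Matrix.unitaryGroup (ιA₁ × ιA₂) ℂ,
      HaarPur.G ψ (a₁, a₂) (a₁, b₂) (b₁, b₂) (b₁, a₂) (U : Matrix (ιA₁ × ιA₂) (ιA₁ × ιA₂) ℂ) ∂μ := by
    simp only [HaarPur.sigma_G]
    have j4 := fun (a₂ b₂ : ιA₂) (a₁ b₁ : ιA₁) => hi (a₁, a₂) (a₁, b₂) (b₁, b₂) (b₁, a₂)
    have j3 := fun (a₂ b₂ : ιA₂) (a₁ : ιA₁) => integrable_finsetSum Finset.univ fun b₁ _ => j4 a₂ b₂ a₁ b₁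
    have j2 := fun (a₂ b₂ : ιA₂) => integrable_finsetSum Finset.univ fun a₁ _ => j3 a₂ b₂ a₁
    have j1 := fun (a₂ : ιA₂) => integrable_finsetSum Finset.univ fun b₂ _ => j2 a₂ b₂
    rw [integral_finsetSum _ fun a _ => j1 a]
    refine Finset.sum_congr rfl fun a₂ _ => ?_
    rw [integral_finsetSum _ fun a _ => j2 a₂ a]
    refine Finset.sum_congr rfl fun b₂ _ => ?_
    rw [integral_finsetSum _ fun a _ => j3 a₂ b₂ a]
    refine Finset.sum_congr rfl fun a₁ _ => ?_
    rw [integral_finsetSum _ fun a _ => j4 a₂ b₂ a₁ a]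
  simp only [hT] at hX hY hS
  simp [Finset.sum_add_distrib, ← Finset.mul_sum, Fintype.card_prod] at hX hY
  simp only [Prod.mk.injEq, true_and, and_true] at hS
  have hS' : (∑ a₂ : ιA₂, ∑ b₂ : ιA₂, ∑ a₁ : ιA₁, ∑ b₁ : ιA₁,
      (α * ((if a₂ = b₂ then (1:ℂ) else 0) * (if b₂ = a₂ then 1 else 0))
      + β * ((if a₁ = b₁ then 1 else 0) * (if b₁ = a₁ then 1 else 0)))) =
      α * ((Fintype.card ιA₁ : ℂ)^2 * (Fintype.card ιA₂ : ℂ))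
        + β * ((Fintype.card ιA₁ : ℂ) * (Fintype.card ιA₂ : ℂ)^2) := by
    have e : ∀ {m : Type} [DecidableEq m] (i j : m), (if i = j then (1:ℂ) else 0) * (if j = i then 1 else 0)
        = if i = j then 1 else 0 := by
      intro m _ i j; by_cases h : i = j <;> simp [h]
    simp [e, Finset.sum_add_distrib, ← Finset.mul_sum]
    ring
  rw [hS, hS', hX, hY]
  have hd : (2 : ℝ) ≤ (Fintype.card ιA₁ : ℝ) * (Fintype.card ιA₂ : ℝ) := by exact_mod_cast hdA
  have n1 : (Fintype.card ιA₁ : ℂ) * (Fintype.card ιA₂ : ℂ) + 1 ≠ 0 := by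
    have : (Fintype.card ιA₁ : ℝ) * (Fintype.card ιA₂ : ℝ) + 1 ≠ 0 := by linarith
    exact_mod_cast this
  have n2 : (Fintype.card ιA₁ : ℂ) * (Fintype.card ιA₂ : ℂ) - 1 ≠ 0 := by
    have : (Fintype.card ιA₁ : ℝ) * (Fintype.card ιA₂ : ℝ) - 1 ≠ 0 := by linarith
    exact_mod_cast this
  field_simp
  ring
end

section
/- Finite-blocklength converse for distributed compression (individual rate): let φ^{ABR} be a pure state on A⊗B⊗R with d_R ≤ d_A d_B, let n ≥ 1, and consider a distributed compression code for n copies of φ with isometric encoders E_A : A^{⊗n} → C_A⊗W_A, E_B : B^{⊗n} → C_B⊗W_B (with d_{W_A} ≤ d_A^{2n}) and isometric decoder D : C_A⊗C_B → Â⊗B̂⊗W_C. If the code has fidelity F ≥ 1−ε for some 0 < ε ≤ 1/(12e²), then 2 log₂ d_{C_A} ≥ n I(A;R)_φ − 2√(3ε) · n · log₂(d_A³ d_B) − η(2√(3ε)), where η(x) = −x log₂ x. -/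
open Matrix
open scoped ComplexOrder

open Classical in
/-- Von Neumann entropy `H(M) = −Tr[M log₂ M]`, via eigenvalues (with `0 log 0 = 0`). -/
noncomputable def vnEntropy {n : Type*} [Fintype n] [DecidableEq n] (M : Matrix n n ℂ) : ℝ :=
  if h : M.IsHermitian then ∑ i, -(h.eigenvalues i * Real.logb 2 (h.eigenvalues i)) else 0

/-- Reduced state on `A` of a state vector on `A ⊗ (B × R)`. -/
noncomputable def redA {ιA ιB ιR : Type} [Fintype ιB] [Fintype ιR]
    (v : ιA × (ιB × ιR) → ℂ) : Matrix ιA ιA ℂ :=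
  Matrix.of fun a a' => ∑ q : ιB × ιR, v (a, q) * star (v (a', q))

/-- Reduced state on `R` of a state vector on `A ⊗ (B × R)`. -/
noncomputable def redR {ιA ιB ιR : Type} [Fintype ιA] [Fintype ιB]
    (v : ιA × (ιB × ιR) → ℂ) : Matrix ιR ιR ℂ :=
  Matrix.of fun r r' => ∑ a : ιA, ∑ b : ιB, v (a, (b, r)) * star (v (a, (b, r')))

/-- Reduced state on `A ⊗ R` of a state vector on `A ⊗ (B × R)`. -/
noncomputable def redAR {ιA ιB ιR : Type} [Fintype ιB]
    (v : ιA × (ιB × ιR) → ℂ) : Matrix (ιA × ιR) (ιA × ιR) ℂ :=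
  Matrix.of fun p q => ∑ b : ιB, v (p.1, (b, p.2)) * star (v (q.1, (b, q.2)))

/-- The `n`-copy state vector `|φ⟩^{⊗n}` of `φ` on `A ⊗ (B × R)`, written on
`R^{⊗n} ⊗ (A^{⊗n} ⊗ B^{⊗n})`. -/
noncomputable def iidVec {ιA ιB ιR : Type} (φ : ιA × (ιB × ιR) → ℂ) (n : ℕ) :
    (Fin n → ιR) × ((Fin n → ιA) × (Fin n → ιB)) → ℂ :=
  fun p => ∏ k : Fin n, φ (p.2.1 k, (p.2.2 k, p.1 k))

/-- The global isometry `I_{R^n} ⊗ (D ∘ (E_A ⊗ E_B))` of a distributed compression code,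
with the output ordered as `(R^n × (Â × B̂)) × ((W_A × W_B) × W_C)`. -/
noncomputable def codeMap {ιA ιB ιR : Type} {n : ℕ} {γA ωA γB ωB ωC : Type}
    [Fintype γA] [Fintype γB] [Fintype ιR] [DecidableEq ιR]
    (EA : Matrix (γA × ωA) (Fin n → ιA) ℂ)
    (EB : Matrix (γB × ωB) (Fin n → ιB) ℂ)
    (D : Matrix (((Fin n → ιA) × (Fin n → ιB)) × ωC) (γA × γB) ℂ) :
    Matrix (((Fin n → ιR) × ((Fin n → ιA) × (Fin n → ιB))) × ((ωA × ωB) × ωC))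
      ((Fin n → ιR) × ((Fin n → ιA) × (Fin n → ιB))) ℂ :=
  Matrix.of fun p q =>
    if p.1.1 = q.1 then
      ∑ cA : γA, ∑ cB : γB,
        D (p.1.2, p.2.2) (cA, cB) * EA (cA, p.2.1.1) q.2.1 * EB (cB, p.2.1.2) q.2.2
    else 0

/-- The fidelity `F = ⟨ψ'| Tr_{W_AW_BW_C}[(I ⊗ D∘(E_A⊗E_B)) ψ' (…)†] |ψ'⟩` of a
distributed compression code on `n` copies of `φ`, where `|ψ'⟩ = |φ⟩^{⊗n}`. -/
noncomputable def codeFidelity {ιA ιB ιR : Type} {n : ℕ} {γA ωA γB ωB ωC : Type}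
    [Fintype ιA] [Fintype ιB] [Fintype ιR] [DecidableEq ιR]
    [Fintype γA] [Fintype γB] [Fintype ωA] [Fintype ωB] [Fintype ωC]
    (φ : ιA × (ιB × ιR) → ℂ)
    (EA : Matrix (γA × ωA) (Fin n → ιA) ℂ)
    (EB : Matrix (γB × ωB) (Fin n → ιB) ℂ)
    (D : Matrix (((Fin n → ιA) × (Fin n → ιB)) × ωC) (γA × γB) ℂ) : ℝ :=
  (star (iidVec φ n) ⬝ᵥ
    (Matrix.of fun i j : (Fin n → ιR) × ((Fin n → ιA) × (Fin n → ιB)) =>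
        ∑ w : (ωA × ωB) × ωC,
          (codeMap (ιR := ιR) EA EB D *
              Matrix.vecMulVec (iidVec φ n) (star (iidVec φ n)) *
              (codeMap (ιR := ιR) EA EB D)ᴴ) (i, w) (j, w)).mulVec
      (iidVec φ n)).re

section EntropyLemmas

open Polynomial in
/-- entropy in nats through the roots of the characteristic polynomial -/
noncomputable def SS {n : Type*} [Fintype n] [DecidableEq n] (M : Matrix n n ℂ) : ℝ :=
  (M.charpoly.roots.map (fun z : ℂ => Real.negMulLog z.re)).sum

lemma vnEntropy_eq_SS {n : Type*} [Fintype n] [DecidableEq n] (M : Matrix n n ℂ)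
    (h : M.IsHermitian) : vnEntropy M = SS M / Real.log 2 := by
  unfold vnEntropy SS
  rw [dif_pos h, h.roots_charpoly_eq_eigenvalues, Multiset.map_map]
  change _ = (∑ i, Real.negMulLog ((h.eigenvalues i : ℂ)).re) / Real.log 2
  rw [Finset.sum_div]
  · apply Finset.sum_congr rfl
    intro i _
    simp [Real.negMulLog, Real.logb]
    ring

open Polynomial in
lemma SS_eq_of_charpoly {n m : Type*} [Fintype n] [DecidableEq n] [Fintype m]
    (M : Matrix n n ℂ) (d : m → ℝ) (h : M.charpoly = ∏ i, (X - C (d i : ℂ))) :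
    SS M = ∑ i, Real.negMulLog (d i) := by
  unfold SS
  rw [h, Polynomial.roots_prod]
  · simp
  · exact Finset.prod_ne_zero_iff.mpr fun i _ => X_sub_C_ne_zero _

open Polynomial in
lemma SS_mul_comm {n m : Type*} [Fintype n] [DecidableEq n] [Fintype m] [DecidableEq m]
    (A : Matrix n m ℂ) (B : Matrix m n ℂ) : SS (A * B) = SS (B * A) := by
  have h := Matrix.charpoly_mul_comm' A B
  have h2 := congrArg (fun p : ℂ[X] => (p.roots.map (fun z : ℂ => Real.negMulLog z.re)).sum) h
  have ne : ∀ (k : ℕ) (p : ℂ[X]), p.Monic → X ^ k * p ≠ 0 := fun k p hp =>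
    mul_ne_zero (pow_ne_zero _ X_ne_zero) hp.ne_zero
  rw [roots_mul (ne _ _ (Matrix.charpoly_monic _)),
    roots_mul (ne _ _ (Matrix.charpoly_monic _))] at h2
  simpa [SS, Multiset.map_nsmul, Multiset.sum_nsmul] using h2

lemma SS_diag {n : Type*} [Fintype n] [DecidableEq n] (V : Matrix n n ℂ) (d : n → ℝ)
    (hV : Vᴴ * V = 1) :
    SS (V * Matrix.diagonal (fun i => (d i : ℂ)) * Vᴴ) = ∑ i, Real.negMulLog (d i) := by
  rw [SS_mul_comm, ← Matrix.mul_assoc, hV, Matrix.one_mul]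
  apply SS_eq_of_charpoly
  rw [Matrix.charpoly_diagonal]

lemma exists_diag {n : Type*} [Fintype n] [DecidableEq n] (M : Matrix n n ℂ)
    (hM : M.PosSemidef) : ∃ (V : Matrix n n ℂ) (d : n → ℝ), Vᴴ * V = 1 ∧ V * Vᴴ = 1 ∧
      (∀ i, 0 ≤ d i) ∧ M = V * Matrix.diagonal (fun i => (d i : ℂ)) * Vᴴ ∧
      Vᴴ * M * V = Matrix.diagonal (fun i => (d i : ℂ)) ∧
      SS M = ∑ i, Real.negMulLog (d i) := by
  have h := hM.1.spectral_theorem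
  rw [Unitary.conjStarAlgAut_apply] at h
  set V : Matrix n n ℂ := (hM.1.eigenvectorUnitary : Matrix n n ℂ) with hV
  have h1 : Vᴴ * V = 1 := by
    rw [← Matrix.star_eq_conjTranspose]; exact Unitary.coe_star_mul_self _
  have h2 : V * Vᴴ = 1 := by
    rw [← Matrix.star_eq_conjTranspose]; exact Unitary.coe_mul_star_self _
  have h3 : M = V * Matrix.diagonal (fun i => (hM.1.eigenvalues i : ℂ)) * Vᴴ := h
  refine ⟨V, hM.1.eigenvalues, h1, h2, hM.eigenvalues_nonneg, h3, ?_, ?_⟩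
  · conv_lhs => rw [h3]
    calc _ = (Vᴴ * V) * Matrix.diagonal (fun i => (hM.1.eigenvalues i : ℂ)) * (Vᴴ * V) := by
          simp only [Matrix.mul_assoc]
      _ = _ := by rw [h1]; simp
  · conv_lhs => rw [h3]
    exact SS_diag _ _ h1

lemma SS_iso {n m k : Type*} [Fintype n] [DecidableEq n] [Fintype m] [DecidableEq m]
    [Fintype k] [DecidableEq k]
    (E : Matrix k n ℂ) (hE : Eᴴ * E = 1) (M : Matrix n m ℂ) :
    SS ((E * M) * (E * M)ᴴ) = SS (M * Mᴴ) := by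
  rw [SS_mul_comm, Matrix.conjTranspose_mul, Matrix.mul_assoc, ← Matrix.mul_assoc Eᴴ, hE,
    Matrix.one_mul, SS_mul_comm]

/-- measuring increases entropy -/
lemma SS_le_meas {n : Type*} [Fintype n] [DecidableEq n] (M : Matrix n n ℂ)
    (hM : M.PosSemidef) (U : Matrix n n ℂ) (hU : Uᴴ * U = 1) (hU' : U * Uᴴ = 1) :
    SS M ≤ ∑ j, Real.negMulLog ((Uᴴ * M * U) j j).re := by
  obtain ⟨V, d, h1, h2, hd, hMd, -, hS⟩ := exists_diag M hM
  set W := Uᴴ * V with hW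
  have hWW : W * Wᴴ = 1 := by
    rw [hW, Matrix.conjTranspose_mul, Matrix.conjTranspose_conjTranspose, Matrix.mul_assoc,
      ← Matrix.mul_assoc V, h2, Matrix.one_mul, hU]
  have hWW' : Wᴴ * W = 1 := by
    rw [hW, Matrix.conjTranspose_mul, Matrix.conjTranspose_conjTranspose, Matrix.mul_assoc,
      ← Matrix.mul_assoc U, hU', Matrix.one_mul, h1]
  have hrow : ∀ j, ∑ i, Complex.normSq (W j i) = 1 := by
    intro j
    have := congrFun (congrFun hWW j) j
    rw [Matrix.mul_apply, Matrix.one_apply_eq] at this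
    simp only [Matrix.conjTranspose_apply, Complex.star_def, Complex.mul_conj] at this
    exact_mod_cast this
  have hcol : ∀ i, ∑ j, Complex.normSq (W j i) = 1 := by
    intro j
    have := congrFun (congrFun hWW' j) j
    rw [Matrix.mul_apply, Matrix.one_apply_eq] at this
    simp only [Matrix.conjTranspose_apply, Complex.star_def, mul_comm, Complex.mul_conj] at this
    exact_mod_cast this
  have hent : ∀ j, ((Uᴴ * M * U) j j).re = ∑ i, Complex.normSq (W j i) * d i := by
    intro j
    have : Uᴴ * M * U = W * Matrix.diagonal (fun i => (d i : ℂ)) * Wᴴ := by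
      conv_lhs => rw [hMd]
      rw [hW, Matrix.conjTranspose_mul, Matrix.conjTranspose_conjTranspose]
      simp only [Matrix.mul_assoc]
    rw [this, Matrix.mul_apply, Complex.re_sum]
    apply Finset.sum_congr rfl
    intro i _
    rw [Matrix.mul_diagonal, Matrix.conjTranspose_apply, Complex.star_def, mul_right_comm,
      Complex.mul_conj]
    rw [← Complex.ofReal_mul, Complex.ofReal_re]
  rw [hS]
  calc ∑ i, Real.negMulLog (d i) = ∑ i, ∑ j, Complex.normSq (W j i) * Real.negMulLog (d i) := by
        apply Finset.sum_congr rfl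
        intro i _
        rw [← Finset.sum_mul, hcol, one_mul]
    _ = ∑ j, ∑ i, Complex.normSq (W j i) * Real.negMulLog (d i) := Finset.sum_comm
    _ ≤ _ := by
        apply Finset.sum_le_sum
        intro j _
        rw [hent]
        have := Real.concaveOn_negMulLog.le_map_sum (t := Finset.univ)
          (w := fun i => Complex.normSq (W j i)) (p := d)
          (fun i _ => Complex.normSq_nonneg _) (hrow j) (fun i _ => hd i)
        simpa using this

lemma meas_nonneg {n m : Type*} [Fintype n] [Fintype m] (M : Matrix n n ℂ)
    (hM : M.PosSemidef) (U : Matrix n m ℂ) (j : m) : 0 ≤ ((Uᴴ * M * U) j j).re := by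
  have := (hM.conjTranspose_mul_mul_same U).diag_nonneg (i := j)
  exact (Complex.le_def.mp this).1

lemma PSD_re_nonneg {n : Type*} [Fintype n] (M : Matrix n n ℂ)
    (hM : M.PosSemidef) (j : n) : 0 ≤ (M j j).re := by
  have := hM.diag_nonneg (i := j)
  exact (Complex.le_def.mp this).1

/-- max entropy -/
lemma SS_le_card {n : Type*} [Fintype n] [DecidableEq n] (M : Matrix n n ℂ)
    (hM : M.PosSemidef) (t : ℝ) (ht : M.trace.re = t) :
    SS M ≤ t * Real.log (Fintype.card n) + Real.negMulLog t := by
  obtain ⟨V, d, h1, h2, hd, hMd, -, hS⟩ := exists_diag M hM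
  have htr : ∑ i, d i = t := by
    rw [← ht, hMd, Matrix.trace_mul_comm, ← Matrix.mul_assoc, h1, Matrix.one_mul,
      Matrix.trace_diagonal]
    simp
  rw [hS]
  rcases isEmpty_or_nonempty n with h | h
  · have : t = 0 := by rw [← htr]; simp
    simp [this]
  have hc : (0:ℝ) < Fintype.card n := by exact_mod_cast Fintype.card_pos
  have := Real.concaveOn_negMulLog.le_map_sum (t := Finset.univ)
    (w := fun _ : n => ((Fintype.card n : ℝ))⁻¹) (p := d)
    (fun i _ => by positivity) (by simp) (fun i _ => hd i)
  simp only [smul_eq_mul, ← Finset.mul_sum, htr] at this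
  rw [inv_mul_le_iff₀ hc, Real.negMulLog_mul] at this
  refine this.trans (le_of_eq ?_)
  rw [Real.negMulLog, Real.log_inv]
  field_simp

lemma negMulLog_split (p a b : ℝ) (hp : 0 ≤ p) (hpa : p ≤ a) (hpb : p ≤ b) :
    Real.negMulLog p ≤ -(p * Real.log a) - p * Real.log b + a * b - p := by
  rcases hp.eq_or_lt with rfl | hp
  · simp; positivity
  have ha : 0 < a := by linarith
  have hb : 0 < b := by linarith
  have := Real.log_le_sub_one_of_pos (x := a * b / p) (by positivity)
  rw [Real.log_div (by positivity) (by positivity), Real.log_mul (by positivity) (by positivity)]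
    at this
  have h2 := mul_le_mul_of_nonneg_left this hp.le
  have h3 : p * (a * b / p - 1) = a * b - p := by field_simp
  rw [h3] at h2
  unfold Real.negMulLog
  linarith

lemma classical_subadd {a b : Type*} [Fintype a] [Fintype b] (p : a × b → ℝ)
    (hp : ∀ x, 0 ≤ p x) (α : a → ℝ) (β : b → ℝ) (hα : ∀ i, ∑ j, p (i, j) = α i)
    (hβ : ∀ j, ∑ i, p (i, j) = β j) (h1 : ∑ i, α i = 1) :
    ∑ x, Real.negMulLog (p x) ≤ ∑ i, Real.negMulLog (α i) + ∑ j, Real.negMulLog (β j) := by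
  have hβ1 : ∑ j, β j = 1 := by
    rw [← h1]; simp_rw [← hα, ← hβ]; exact Finset.sum_comm
  have key : ∀ x : a × b, Real.negMulLog (p x) ≤
      -(p x * Real.log (α x.1)) - p x * Real.log (β x.2) + α x.1 * β x.2 - p x := by
    rintro ⟨i, j⟩
    apply negMulLog_split _ _ _ (hp _)
    · rw [← hα]
      exact Finset.single_le_sum (f := fun j => p (i, j)) (fun j _ => hp _) (Finset.mem_univ j)
    · rw [← hβ]
      exact Finset.single_le_sum (f := fun i => p (i, j)) (fun j _ => hp _) (Finset.mem_univ i)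
  refine (Finset.sum_le_sum fun x _ => key x).trans (le_of_eq ?_)
  simp only [Finset.sum_sub_distrib, Finset.sum_add_distrib, Finset.sum_neg_distrib]
  have e1 : ∑ x : a × b, p x * Real.log (α x.1) = - ∑ i, Real.negMulLog (α i) := by
    rw [Fintype.sum_prod_type, ← Finset.sum_neg_distrib]
    apply Finset.sum_congr rfl; intro i _
    dsimp only
    rw [← Finset.sum_mul, hα, Real.negMulLog]; ring
  have e2 : ∑ x : a × b, p x * Real.log (β x.2) = - ∑ i, Real.negMulLog (β i) := by
    rw [Fintype.sum_prod_type_right, ← Finset.sum_neg_distrib]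
    apply Finset.sum_congr rfl; intro i _
    dsimp only
    rw [← Finset.sum_mul, hβ, Real.negMulLog]; ring
  have e3 : ∑ x : a × b, α x.1 * β x.2 = 1 := by
    rw [Fintype.sum_prod_type, ← Finset.sum_mul_sum, h1, hβ1, one_mul]
  have e4 : ∑ x : a × b, p x = 1 := by
    rw [Fintype.sum_prod_type]; simp_rw [hα, h1]
  rw [e1, e2, e3, e4]; ring

lemma ptr_aux {a b : Type*} [Fintype a] [Fintype b] [DecidableEq a] [DecidableEq b]
    (ρ : Matrix (a × b) (a × b) ℂ) (UA : Matrix a a ℂ) (UB : Matrix b b ℂ)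
    (hB : UB * UBᴴ = 1) (i : a) :
    ∑ j, ((Matrix.kronecker UA UB)ᴴ * ρ * Matrix.kronecker UA UB) (i, j) (i, j) =
      (UAᴴ * (Matrix.of fun x y => ∑ z, ρ (x, z) (y, z)) * UA) i i := by
  have hB' : ∀ z w, ∑ j, UB z j * star (UB w j) = if z = w then 1 else 0 := by
    intro z w
    have := congrFun (congrFun hB z) w
    rwa [Matrix.mul_apply, Matrix.one_apply] at this
  simp only [Matrix.mul_apply, Matrix.conjTranspose_apply, Matrix.kronecker,
    Matrix.kroneckerMap_apply, Matrix.of_apply, Fintype.sum_prod_type, Finset.sum_mul,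
    Finset.mul_sum, star_mul']
  calc _ = ∑ y, ∑ w, ∑ x, ∑ z, star (UA x i) * ρ (x, z) (y, w) * UA y i *
        ∑ j, UB w j * star (UB z j) := by
        rw [Finset.sum_comm]
        refine Finset.sum_congr rfl fun y _ => ?_
        rw [Finset.sum_comm]
        refine Finset.sum_congr rfl fun w _ => ?_
        rw [Finset.sum_comm]
        refine Finset.sum_congr rfl fun x _ => ?_
        rw [Finset.sum_comm]
        refine Finset.sum_congr rfl fun z _ => ?_
        rw [Finset.mul_sum]
        refine Finset.sum_congr rfl fun j _ => ?_
        ring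
    _ = _ := by
        simp only [hB', mul_ite, mul_one, mul_zero, Finset.sum_ite_eq, Finset.mem_univ, if_true]
        refine Finset.sum_congr rfl fun y _ => ?_
        rw [Finset.sum_comm]

lemma ptr_aux' {a b : Type*} [Fintype a] [Fintype b] [DecidableEq a] [DecidableEq b]
    (ρ : Matrix (a × b) (a × b) ℂ) (UA : Matrix a a ℂ) (UB : Matrix b b ℂ)
    (hA : UA * UAᴴ = 1) (j : b) :
    ∑ i, ((Matrix.kronecker UA UB)ᴴ * ρ * Matrix.kronecker UA UB) (i, j) (i, j) =
      (UBᴴ * (Matrix.of fun x y => ∑ z, ρ (z, x) (z, y)) * UB) j j := by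
  have := ptr_aux (ρ.submatrix Prod.swap Prod.swap) UB UA hA j
  rw [show (Matrix.of fun x y => ∑ z, ρ (z, x) (z, y)) =
    (Matrix.of fun x y => ∑ z, (ρ.submatrix Prod.swap Prod.swap) (x, z) (y, z)) from rfl, ← this]
  refine Finset.sum_congr rfl fun i _ => ?_
  simp only [Matrix.mul_apply, Matrix.conjTranspose_apply, Matrix.kronecker,
    Matrix.kroneckerMap_apply, Fintype.sum_prod_type, Matrix.submatrix_apply, Prod.swap_prod_mk]
  rw [Finset.sum_comm]
  refine Finset.sum_congr rfl fun y _ => Finset.sum_congr rfl fun w _ => ?_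
  rw [Finset.sum_comm]
  rw [mul_comm (UA w i)]
  congr 1
  refine Finset.sum_congr rfl fun _ _ => Finset.sum_congr rfl fun _ _ => ?_
  rw [mul_comm (UA _ i)]

lemma kron_unitary {a b : Type*} [Fintype a] [Fintype b] [DecidableEq a] [DecidableEq b]
    (UA : Matrix a a ℂ) (UB : Matrix b b ℂ) (hA : UAᴴ * UA = 1) (hB : UBᴴ * UB = 1) :
    (Matrix.kronecker UA UB)ᴴ * Matrix.kronecker UA UB = 1 := by
  rw [Matrix.kronecker, Matrix.conjTranspose_kronecker, ← Matrix.mul_kronecker_mul, hA, hB,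
    Matrix.one_kronecker_one]

lemma kron_unitary' {a b : Type*} [Fintype a] [Fintype b] [DecidableEq a] [DecidableEq b]
    (UA : Matrix a a ℂ) (UB : Matrix b b ℂ) (hA : UA * UAᴴ = 1) (hB : UB * UBᴴ = 1) :
    Matrix.kronecker UA UB * (Matrix.kronecker UA UB)ᴴ = 1 := by
  rw [Matrix.kronecker, Matrix.conjTranspose_kronecker, ← Matrix.mul_kronecker_mul, hA, hB,
    Matrix.one_kronecker_one]

lemma SS_subadd {a b : Type*} [Fintype a] [Fintype b] [DecidableEq a] [DecidableEq b]
    (ρ : Matrix (a × b) (a × b) ℂ) (hρ : ρ.PosSemidef) (htr : ρ.trace = 1)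
    (ρA : Matrix a a ℂ) (ρB : Matrix b b ℂ)
    (hA : ρA.PosSemidef) (hB : ρB.PosSemidef)
    (eA : ρA = (Matrix.of fun x y => ∑ z, ρ (x, z) (y, z)))
    (eB : ρB = (Matrix.of fun x y => ∑ z, ρ (z, x) (z, y))) :
    SS ρ ≤ SS ρA + SS ρB := by
  obtain ⟨U, d, u1, u2, hd, -, hUd, hS⟩ := exists_diag ρA hA
  obtain ⟨V, e, v1, v2, he, -, hVe, hS'⟩ := exists_diag ρB hB
  rw [hS, hS']
  refine (SS_le_meas ρ hρ (Matrix.kronecker U V) (kron_unitary _ _ u1 v1)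
    (kron_unitary' _ _ u2 v2)).trans ?_
  apply classical_subadd _ (fun x => meas_nonneg _ hρ _ _)
  · intro i
    rw [← Complex.re_sum, ptr_aux _ _ _ v2, ← eA, hUd]; simp
  · intro j
    rw [← Complex.re_sum, ptr_aux' _ _ _ u2, ← eB, hVe]; simp
  · have : (Uᴴ * ρA * U).trace = 1 := by
      rw [Matrix.trace_mul_comm, ← Matrix.mul_assoc, u2, Matrix.one_mul, ← htr, eA]
      simp [Matrix.trace, Fintype.sum_prod_type]
    rw [hUd, Matrix.trace_diagonal] at this
    exact_mod_cast this

lemma SS_kron {a b : Type*} [Fintype a] [Fintype b] [DecidableEq a] [DecidableEq b]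
    (ρ : Matrix a a ℂ) (σ : Matrix b b ℂ) (hρ : ρ.PosSemidef) (hσ : σ.PosSemidef)
    (tρ : ρ.trace = 1) (tσ : σ.trace = 1) :
    SS (Matrix.kronecker ρ σ) = SS ρ + SS σ := by
  obtain ⟨U, d, u1, u2, hd, hU, hUd, hS⟩ := exists_diag ρ hρ
  obtain ⟨V, e, v1, v2, he, hV, hVe, hS'⟩ := exists_diag σ hσ
  have h1 : ∑ i, d i = 1 := by
    have : (Uᴴ * ρ * U).trace = 1 := by
      rw [Matrix.trace_mul_comm, ← Matrix.mul_assoc, u2, Matrix.one_mul, tρ]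
    rw [hUd, Matrix.trace_diagonal] at this
    exact_mod_cast this
  have h2 : ∑ i, e i = 1 := by
    have : (Vᴴ * σ * V).trace = 1 := by
      rw [Matrix.trace_mul_comm, ← Matrix.mul_assoc, v2, Matrix.one_mul, tσ]
    rw [hVe, Matrix.trace_diagonal] at this
    exact_mod_cast this
  have : Matrix.kronecker ρ σ = Matrix.kronecker U V *
      Matrix.diagonal (fun i : a × b => ((d i.1 * e i.2 : ℝ) : ℂ)) * (Matrix.kronecker U V)ᴴ := by
    conv_lhs => rw [hU, hV]
    simp only [Matrix.kronecker, Matrix.conjTranspose_kronecker, Matrix.mul_kronecker_mul,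
      Matrix.diagonal_kronecker_diagonal, Complex.ofReal_mul]
  rw [this, SS_diag _ _ (kron_unitary _ _ u1 v1), hS, hS', Fintype.sum_prod_type]
  simp only [Real.negMulLog_mul, Finset.sum_add_distrib, ← Finset.sum_mul, ← Finset.mul_sum,
    h1, h2, one_mul]

/-- `S(MM† + NN†) ≤ S(MM†) + S(NN†)` -/
lemma SS_add_le {x y z : Type*} [Fintype x] [DecidableEq x] [Fintype y] [DecidableEq y]
    [Fintype z] [DecidableEq z] (M : Matrix x y ℂ) (N : Matrix x z ℂ) :
    SS (M * Mᴴ + N * Nᴴ) ≤ SS (M * Mᴴ) + SS (N * Nᴴ) := by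
  have h0 : M * Mᴴ + N * Nᴴ = Matrix.fromCols M N * (Matrix.fromCols M N)ᴴ := by
    rw [Matrix.conjTranspose_fromCols_eq_fromRows_conjTranspose, Matrix.fromCols_mul_fromRows]
  rw [h0, SS_mul_comm, SS_mul_comm M, SS_mul_comm N]
  obtain ⟨U, d, u1, u2, hd, hU, hUd, hS⟩ := exists_diag _ (Matrix.posSemidef_conjTranspose_mul_self M)
  obtain ⟨V, e, v1, v2, he, hV, hVe, hS'⟩ := exists_diag _ (Matrix.posSemidef_conjTranspose_mul_self N)
  rw [hS, hS']
  refine (SS_le_meas _ (Matrix.posSemidef_conjTranspose_mul_self _) (Matrix.fromBlocks U 0 0 V)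
    ?_ ?_).trans (le_of_eq ?_)
  · rw [Matrix.fromBlocks_conjTranspose, Matrix.fromBlocks_multiply]
    simp [u1, v1]
  · rw [Matrix.fromBlocks_conjTranspose, Matrix.fromBlocks_multiply]
    simp [u2, v2]
  · rw [Matrix.conjTranspose_fromCols_eq_fromRows_conjTranspose, Matrix.fromRows_mul_fromCols,
      Matrix.fromBlocks_conjTranspose, Matrix.fromBlocks_multiply, Matrix.fromBlocks_multiply]
    simp [hUd, hVe]

lemma convex_aux (p q t : ℝ) (hp : 0 ≤ p) (hq : 0 ≤ q) (hpq : p + q ≤ 1 + t) (ht : 0 ≤ t) :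
    Real.negMulLog p ≤ Real.negMulLog (p + q) + q * (1 + t) := by
  have hq2 : q * Real.log (p + q) ≤ q * t := by
    apply mul_le_mul_of_nonneg_left _ hq
    rcases (add_nonneg hp hq).eq_or_lt with h | h
    · rw [← h]; simpa using ht
    · have := Real.log_le_sub_one_of_pos h
      linarith
  have h3 : p * (Real.log (p + q) - Real.log p) ≤ q := by
    rcases hp.eq_or_lt with rfl | hp
    · simpa using hq
    rw [← Real.log_div (by linarith) (by linarith)]
    have := mul_le_mul_of_nonneg_left
      (Real.log_le_sub_one_of_pos (x := (p + q) / p) (by positivity)) hp.le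
    have e : p * ((p + q) / p - 1) = q := by field_simp; ring
    linarith
  unfold Real.negMulLog
  nlinarith

/-- almost monotonicity under adding a small positive part -/
lemma SS_le_add {x : Type*} [Fintype x] [DecidableEq x] (τ Q : Matrix x x ℂ)
    (hτ : τ.PosSemidef) (hQ : Q.PosSemidef) (t : ℝ) (h1 : τ.trace.re = 1) (h2 : Q.trace.re = t) :
    SS τ ≤ SS (τ + Q) + t * (1 + t) := by
  obtain ⟨U, d, u1, u2, hd, hU, hUd, hS⟩ := exists_diag _ (hτ.add hQ)
  have htr : ∀ N : Matrix x x ℂ, ∑ j, ((Uᴴ * N * U) j j).re = N.trace.re := by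
    intro N
    have : (Uᴴ * N * U).trace = N.trace := by
      rw [Matrix.trace_mul_comm, ← Matrix.mul_assoc, u2, Matrix.one_mul]
    rw [← this, Matrix.trace, Complex.re_sum]; rfl
  have hdj : ∀ j, d j = ((Uᴴ * τ * U) j j).re + ((Uᴴ * Q * U) j j).re := by
    intro j
    have := congrFun (congrFun hUd j) j
    rw [Matrix.diagonal_apply_eq, Matrix.mul_add, Matrix.add_mul, Matrix.add_apply] at this
    rw [← Complex.add_re, this, Complex.ofReal_re]
  have hle : ∀ (N : Matrix x x ℂ), N.PosSemidef → ∀ j, ((Uᴴ * N * U) j j).re ≤ N.trace.re := by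
    intro N hN j
    rw [← htr]
    exact Finset.single_le_sum (f := fun j => ((Uᴴ * N * U) j j).re)
      (fun j _ => meas_nonneg _ hN _ _) (Finset.mem_univ j)
  refine (SS_le_meas τ hτ U u1 u2).trans ?_
  have ht : t * (1 + t) = ∑ j, ((Uᴴ * Q * U) j j).re * (1 + t) := by
    rw [← Finset.sum_mul, htr, h2]
  have ht0 : 0 ≤ t := by
    rw [← h2, ← htr]; exact Finset.sum_nonneg fun j _ => meas_nonneg _ hQ _ _
  rw [hS, ht, ← Finset.sum_add_distrib]
  apply Finset.sum_le_sum
  intro j _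
  rw [hdj]
  apply convex_aux _ _ _ (meas_nonneg _ hτ _ _) (meas_nonneg _ hQ _ _) _ ht0
  have := hle τ hτ j
  have := hle Q hQ j
  linarith

lemma negMulLog_mono (t s : ℝ) (ht : 0 ≤ t) (hts : t ≤ s) (hs : s ≤ Real.exp (-1)) :
    Real.negMulLog t ≤ Real.negMulLog s := by
  rcases ht.eq_or_lt with rfl | ht
  · rw [Real.negMulLog_zero]
    exact Real.negMulLog_nonneg hts (hs.trans (by rw [Real.exp_le_one_iff]; norm_num))
  have hs0 : 0 < s := by linarith
  have hl : Real.log s ≤ -1 := by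
    have := Real.log_le_log hs0 hs
    rwa [Real.log_exp] at this
  have := Real.log_le_sub_one_of_pos (x := s / t) (by positivity)
  rw [Real.log_div (by linarith) (by linarith)] at this
  have h2 := mul_le_mul_of_nonneg_left this ht.le
  have e : t * (s / t - 1) = s - t := by field_simp
  rw [e] at h2
  unfold Real.negMulLog
  nlinarith

end EntropyLemmas

section OneShot

lemma SS_flip {x y : Type*} [Fintype x] [DecidableEq x] [Fintype y] [DecidableEq y]
    (M : Matrix x y ℂ) : SS (Mᵀ * Mᵀᴴ) = SS (M * Mᴴ) := by
  have : Mᵀ * Mᵀᴴ = (Mᴴ * M)ᵀ := by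
    rw [Matrix.transpose_mul]; rfl
  rw [this, SS_mul_comm M]
  unfold SS
  rw [Matrix.charpoly_transpose]

lemma PSD_gram {x y : Type*} [Fintype x] [Fintype y] (M : Matrix x y ℂ) :
    (M * Mᴴ).PosSemidef := Matrix.posSemidef_self_mul_conjTranspose M

lemma sub_amp {a b k : Type*} [Fintype a] [Fintype b] [DecidableEq a] [DecidableEq b]
    [Fintype k] [DecidableEq k] (M : Matrix (a × b) k ℂ) (h : (M * Mᴴ).trace = 1)
    (N1 : Matrix a (b × k) ℂ) (N2 : Matrix b (a × k) ℂ)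
    (e1 : ∀ i j l, N1 i (j, l) = M (i, j) l) (e2 : ∀ i j l, N2 j (i, l) = M (i, j) l) :
    SS (M * Mᴴ) ≤ SS (N1 * N1ᴴ) + SS (N2 * N2ᴴ) := by
  apply SS_subadd _ (PSD_gram _) h _ _ (PSD_gram _) (PSD_gram _)
  · ext i j
    simp [Matrix.mul_apply, Fintype.sum_prod_type, e1]
  · ext i j
    simp [Matrix.mul_apply, Fintype.sum_prod_type, e2]

lemma exists_hyp (θ F : ℝ) (h0 : 0 < θ) (h1 : θ ≤ 1) (hF : 1 - θ ^ 2 / 3 ≤ F) :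
    ∃ α β : ℝ, β ^ 2 - α ^ 2 = 1 ∧ α ^ 2 + β ^ 2 - 2 * α * β * F ≤ θ := by
  set c := Real.sqrt (2 / θ) with hc
  have hc2 : c ^ 2 = 2 / θ := Real.sq_sqrt (by positivity)
  have hc0 : 0 < c := Real.sqrt_pos.mpr (by positivity)
  have e : c ^ 2 * θ = 2 := by rw [hc2]; field_simp
  have ei : (c⁻¹) ^ 2 = θ / 2 := by rw [inv_pow, hc2]; field_simp
  have ec : c * c⁻¹ = 1 := mul_inv_cancel₀ hc0.ne'
  refine ⟨(c - c⁻¹) / 2, (c + c⁻¹) / 2, ?_, ?_⟩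
  · nlinarith
  · have h3 : ((c - c⁻¹) / 2) ^ 2 + ((c + c⁻¹) / 2) ^ 2 - 2 * ((c - c⁻¹) / 2) * ((c + c⁻¹) / 2) * F
       = (c ^ 2 + (c⁻¹) ^ 2) / 2 - (c ^ 2 - (c⁻¹) ^ 2) * F / 2 := by ring
    rw [h3, ei]
    have h4 : 0 ≤ c ^ 2 - θ / 2 := by
      rw [hc2, sub_nonneg, le_div_iff₀ h0]; nlinarith
    have h5 := mul_le_mul_of_nonneg_left hF h4
    have h6 : c ^ 2 * θ ^ 2 = 2 * θ := by rw [← e]; ring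
    nlinarith [pow_pos h0 3]

lemma SS_cont {x y : Type*} [Fintype x] [DecidableEq x] [Fintype y] [DecidableEq y]
    (A B : Matrix x y ℂ) (hA : (A * Aᴴ).trace = 1) (hB : (B * Bᴴ).trace = 1)
    (θ : ℝ) (h0 : 0 < θ) (h1 : θ ≤ 1) (hF : 1 - θ ^ 2 / 3 ≤ (A * Bᴴ).trace.re) :
    ∃ t, 0 ≤ t ∧ t ≤ θ ∧ SS (B * Bᴴ) ≤ SS (A * Aᴴ) +
      (t * Real.log (Fintype.card x) + Real.negMulLog t) + t * (1 + t) := by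
  obtain ⟨α, β, hαβ, ht⟩ := exists_hyp θ _ h0 h1 hF
  set F := (A * Bᴴ).trace.re with hFd
  have hF' : (B * Aᴴ).trace.re = F := by
    have : B * Aᴴ = (A * Bᴴ)ᴴ := by simp
    rw [this, Matrix.trace_conjTranspose]; simp [hFd]
  set N : Matrix x y ℂ := (α : ℂ) • A - (β : ℂ) • B with hN
  set N' : Matrix x y ℂ := (β : ℂ) • A - (α : ℂ) • B with hN'
  have ex : ∀ (u v : ℝ), ((u : ℂ) • A - (v : ℂ) • B) * ((u : ℂ) • A - (v : ℂ) • B)ᴴ =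
      ((u ^ 2 : ℝ) : ℂ) • (A * Aᴴ) + ((v ^ 2 : ℝ) : ℂ) • (B * Bᴴ)
        - ((u * v : ℝ) : ℂ) • (A * Bᴴ + B * Aᴴ) := by
    intro u v
    simp only [Matrix.conjTranspose_sub, Matrix.conjTranspose_smul, Matrix.sub_mul, Matrix.mul_sub,
      Matrix.smul_mul, Matrix.mul_smul, Complex.star_def, Complex.conj_ofReal,
      Complex.ofReal_mul, Complex.ofReal_pow]
    module
  have trN : ∀ (u v : ℝ), (((u : ℂ) • A - (v : ℂ) • B) * ((u : ℂ) • A - (v : ℂ) • B)ᴴ).trace.re =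
      u ^ 2 + v ^ 2 - 2 * u * v * F := by
    intro u v
    rw [ex, Matrix.trace_sub, Matrix.trace_add, Matrix.trace_smul, Matrix.trace_smul,
      Matrix.trace_smul, Matrix.trace_add, hA, hB]
    simp only [smul_eq_mul, Complex.sub_re, Complex.add_re, Complex.re_ofReal_mul, Complex.one_re,
      hF', ← hFd]
    ring
  have hsum : A * Aᴴ + N * Nᴴ = B * Bᴴ + N' * N'ᴴ := by
    rw [hN, hN', ex, ex, mul_comm β α, show β ^ 2 = 1 + α ^ 2 by linarith]
    simp only [Complex.ofReal_add, Complex.ofReal_one]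
    module
  have ht0 : 0 ≤ α ^ 2 + β ^ 2 - 2 * α * β * F := by
    rw [← trN, Matrix.trace, Complex.re_sum]
    exact Finset.sum_nonneg fun j _ => PSD_re_nonneg _ (PSD_gram _) j
  refine ⟨_, ht0, ht, ?_⟩
  have s1 := SS_le_add (B * Bᴴ) (N' * N'ᴴ) (PSD_gram _) (PSD_gram _)
    (α ^ 2 + β ^ 2 - 2 * α * β * F) (by rw [hB]; rfl) (by rw [hN', trN]; ring)
  have s2 := SS_add_le A N
  have s3 := SS_le_card (N * Nᴴ) (PSD_gram _) (α ^ 2 + β ^ 2 - 2 * α * β * F) (by rw [hN, trN])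
  rw [← hsum] at s1
  linarith

end OneShot

section OneShot2

lemma sum_rot {a b c : Type*} [Fintype a] [Fintype b] [Fintype c] (f : a → b → c → ℂ) :
    ∑ x, ∑ y, ∑ z, f x y z = ∑ z, ∑ x, ∑ y, f x y z := by
  rw [Finset.sum_comm]
  simp_rw [fun y => Finset.sum_comm (s := (Finset.univ : Finset a)) (t := (Finset.univ : Finset c))
      (f := fun x z => f x y z)]
  rw [Finset.sum_comm]
  exact Finset.sum_congr rfl fun z _ => Finset.sum_comm

lemma kron_iso {a b a' b' : Type*} [Fintype a] [Fintype b] [DecidableEq a'] [DecidableEq b']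
    (UA : Matrix a a' ℂ) (UB : Matrix b b' ℂ) (hA : UAᴴ * UA = 1) (hB : UBᴴ * UB = 1) :
    (Matrix.kronecker UA UB)ᴴ * Matrix.kronecker UA UB = 1 := by
  rw [Matrix.kronecker, Matrix.conjTranspose_kronecker, ← Matrix.mul_kronecker_mul, hA, hB,
    Matrix.one_kronecker_one]

/-- output amplitude of the code -/
noncomputable def outAmp {P Q T γA ωA γB ωB ωC : Type} [Fintype P] [Fintype Q]
    [Fintype γA] [Fintype γB]
    (ψ : T × (P × Q) → ℂ) (EA : Matrix (γA × ωA) P ℂ) (EB : Matrix (γB × ωB) Q ℂ)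
    (D : Matrix ((P × Q) × ωC) (γA × γB) ℂ) (x : T × (P × Q)) (wA : ωA) (wB : ωB) (wC : ωC) : ℂ :=
  ∑ c, ∑ q, (∑ cB, D (x.2, wC) (c, cB) * EB (cB, wB) q) * ∑ p, EA (c, wA) p * ψ (x.1, (p, q))

lemma oneshot {P Q T γA ωA γB ωB ωC : Type}
    [Fintype P] [DecidableEq P] [Fintype Q] [DecidableEq Q] [Fintype T] [DecidableEq T]
    [Fintype γA] [DecidableEq γA] [Fintype ωA] [DecidableEq ωA]
    [Fintype γB] [DecidableEq γB] [Fintype ωB] [DecidableEq ωB]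
    [Fintype ωC] [DecidableEq ωC]
    (ψ : T × (P × Q) → ℂ) (hψ : ∑ x, ψ x * star (ψ x) = 1)
    (EA : Matrix (γA × ωA) P ℂ) (hEA : EAᴴ * EA = 1)
    (EB : Matrix (γB × ωB) Q ℂ) (hEB : EBᴴ * EB = 1)
    (D : Matrix ((P × Q) × ωC) (γA × γB) ℂ) (hD : Dᴴ * D = 1)
    (ρP : Matrix P P ℂ) (hρP : ∀ p p', ρP p p' = ∑ q, ∑ t, ψ (t, (p, q)) * star (ψ (t, (p', q))))
    (ρQ : Matrix Q Q ℂ) (hρQ : ∀ q q', ρQ q q' = ∑ p, ∑ t, ψ (t, (p, q)) * star (ψ (t, (p, q'))))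
    (ρT : Matrix T T ℂ) (hρT : ∀ t t', ρT t t' = ∑ p, ∑ q, ψ (t, (p, q)) * star (ψ (t', (p, q))))
    (θ : ℝ) (h0 : 0 < θ) (h1 : θ ≤ 1)
    (hF : 1 - θ ^ 2 / 3 ≤ (∑ wA, ∑ wB, ∑ wC,
      (∑ x, star (ψ x) * outAmp ψ EA EB D x wA wB wC) *
        star (∑ x, star (ψ x) * outAmp ψ EA EB D x wA wB wC)).re) :
    ∃ t, 0 ≤ t ∧ t ≤ θ ∧ SS ρP + SS ρT - SS ρQ ≤ 2 * Real.log (Fintype.card γA) +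
      (t * Real.log (Fintype.card (ωA × T)) + Real.negMulLog t) + t * (1 + t) := by
  -- amplitudes
  let MP : Matrix P (Q × T) ℂ := Matrix.of fun p k => ψ (k.2, (p, k.1))
  have eP : ρP = MP * MPᴴ := by
    ext p p'
    simp [hρP, MP, Matrix.mul_apply, Fintype.sum_prod_type]
  have trP : (MP * MPᴴ).trace = 1 := by
    rw [← hψ, Fintype.sum_prod_type]
    simp only [MP, Matrix.trace, Matrix.diag_apply, Matrix.mul_apply, Matrix.of_apply,
      Matrix.conjTranspose_apply, Fintype.sum_prod_type]
    exact sum_rot _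
  let Θ : Matrix (γA × ωA) (Q × T) ℂ := EA * MP
  have hΘ : Θᴴ * Θ = MPᴴ * MP := by
    simp only [Θ]
    rw [Matrix.conjTranspose_mul, Matrix.mul_assoc, ← Matrix.mul_assoc EAᴴ, hEA, Matrix.one_mul]
  have sP : SS ρP = SS (Θ * Θᴴ) := by rw [eP]; exact (SS_iso EA hEA MP).symm
  have trΘ : (Θ * Θᴴ).trace = 1 := by
    rw [Matrix.trace_mul_comm, hΘ, Matrix.trace_mul_comm, trP]
  let C : Matrix γA (ωA × (Q × T)) ℂ := Matrix.of fun c k => Θ (c, k.1) k.2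
  let W : Matrix ωA (γA × (Q × T)) ℂ := Matrix.of fun w k => Θ (k.1, w) k.2
  have s1 : SS (Θ * Θᴴ) ≤ SS (C * Cᴴ) + SS (W * Wᴴ) :=
    sub_amp Θ trΘ C W (fun _ _ _ => rfl) (fun _ _ _ => rfl)
  have trC : (C * Cᴴ).trace = 1 := by
    rw [← trΘ]
    simp [C, Matrix.trace, Matrix.mul_apply, Fintype.sum_prod_type]
  have trW : (W * Wᴴ).trace = 1 := by
    rw [← trΘ]
    simp only [W, Matrix.trace, Matrix.mul_apply, Fintype.sum_prod_type, Matrix.diag_apply,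
      Matrix.of_apply, Matrix.conjTranspose_apply]
    rw [Finset.sum_comm]
  have sC : SS (C * Cᴴ) ≤ Real.log (Fintype.card γA) := by
    have := SS_le_card (C * Cᴴ) (PSD_gram _) 1 (by rw [trC]; rfl)
    simpa using this
  let Y : Matrix (ωA × T) (γA × Q) ℂ := Matrix.of fun i k => Θ (k.1, i.1) (k.2, i.2)
  have trY : (Y * Yᴴ).trace = 1 := by
    rw [← trW]
    simp only [W, Y, Matrix.trace, Matrix.mul_apply, Fintype.sum_prod_type, Matrix.diag_apply,
      Matrix.of_apply, Matrix.conjTranspose_apply]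
    refine Finset.sum_congr rfl fun w _ => ?_
    rw [Finset.sum_comm]
    refine Finset.sum_congr rfl fun c _ => ?_
    rw [Finset.sum_comm]
  have trX : (Yᵀ * Yᵀᴴ).trace = 1 := by
    have : Yᵀ * Yᵀᴴ = (Yᴴ * Y)ᵀ := by rw [Matrix.transpose_mul]; rfl
    rw [this, Matrix.trace_transpose, Matrix.trace_mul_comm, trY]
  have s2 : SS (Y * Yᴴ) ≤ SS (C * Cᴴ) + SS ρQ := by
    rw [← SS_flip]
    let N1 : Matrix γA (Q × (ωA × T)) ℂ := Matrix.of fun c k => Θ (c, k.2.1) (k.1, k.2.2)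
    let N2 : Matrix Q (γA × (ωA × T)) ℂ := Matrix.of fun q k => Θ (k.1, k.2.1) (q, k.2.2)
    have := sub_amp Yᵀ trX N1 N2 (fun _ _ _ => rfl) (fun _ _ _ => rfl)
    have e1 : N1 * N1ᴴ = C * Cᴴ := by
      ext c c'
      simp only [N1, C, Matrix.mul_apply, Fintype.sum_prod_type, Matrix.of_apply,
        Matrix.conjTranspose_apply]
      rw [Finset.sum_comm]
    have e2 : N2 * N2ᴴ = ρQ := by
      ext q q'
      have h3 : ∀ t, ∑ c, ∑ w, Θ (c, w) (q, t) * star (Θ (c, w) (q', t)) =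
          ∑ p, ψ (t, (p, q)) * star (ψ (t, (p, q'))) := by
        intro t
        have := congrFun (congrFun hΘ (q', t)) (q, t)
        simp only [Matrix.mul_apply, Fintype.sum_prod_type, Matrix.conjTranspose_apply] at this
        simp only [mul_comm (Θ _ _), this]
        refine Finset.sum_congr rfl fun p _ => ?_
        simp only [MP, Matrix.of_apply]
        ring
      rw [hρQ, Finset.sum_comm]
      simp_rw [← h3]
      simp only [N2, Matrix.mul_apply, Fintype.sum_prod_type, Matrix.of_apply,
        Matrix.conjTranspose_apply]
      exact sum_rot _
    rw [e1, e2] at this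
    exact this
  -- decoder and Bob's encoder
  let G : Matrix (((P × Q) × ωC) × ωB) (γA × Q) ℂ := Matrix.of fun k l =>
    ∑ cB, D (k.1.1, k.1.2) (l.1, cB) * EB (cB, k.2) l.2
  have hG : Gᴴ * G = 1 := by
    let G1 : Matrix (((P × Q) × ωC) × ωB) ((γA × γB) × ωB) ℂ :=
      Matrix.kronecker D (1 : Matrix ωB ωB ℂ)
    let G2 : Matrix (γA × (γB × ωB)) (γA × Q) ℂ := Matrix.kronecker (1 : Matrix γA γA ℂ) EB
    have h1 : G1ᴴ * G1 = 1 := kron_iso _ _ hD (by simp)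
    have h2 : G2ᴴ * G2 = 1 := kron_iso _ _ (by simp) hEB
    let G3 : Matrix ((γA × γB) × ωB) (γA × Q) ℂ :=
      G2.submatrix (Equiv.prodAssoc γA γB ωB) (Equiv.refl _)
    have h3 : G3ᴴ * G3 = 1 := by
      simp only [G3]
      rw [Matrix.conjTranspose_submatrix, Matrix.submatrix_mul_equiv, h2]
      simp
    have hGG : G = G1 * G3 := by
      ext ⟨⟨pq, wC⟩, wB⟩ ⟨c, q⟩
      simp [G, G1, G2, G3, Matrix.mul_apply, Fintype.sum_prod_type, Matrix.kronecker,
        Matrix.one_apply]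
    rw [hGG, Matrix.conjTranspose_mul, Matrix.mul_assoc, ← Matrix.mul_assoc G1ᴴ, h1,
      Matrix.one_mul, h3]
  let Z : Matrix (ωA × T) (((P × Q) × ωC) × ωB) ℂ := Y * Gᵀ
  have hZ : Z * Zᴴ = Y * Yᴴ := by
    have : Gᵀ * Gᵀᴴ = 1 := by
      have : Gᵀ * Gᵀᴴ = (Gᴴ * G)ᵀ := by rw [Matrix.transpose_mul]; rfl
      rw [this, hG, Matrix.transpose_one]
    simp only [Z]
    rw [Matrix.conjTranspose_mul, Matrix.mul_assoc, ← Matrix.mul_assoc Gᵀ, this, Matrix.one_mul]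
  have hZout : ∀ wA t pq wC wB, Z (wA, t) ((pq, wC), wB) = outAmp ψ EA EB D (t, pq) wA wB wC := by
    intro wA t pq wC wB
    simp only [Z, Y, G, Θ, MP, outAmp, Matrix.mul_apply, Fintype.sum_prod_type, Matrix.of_apply,
      Matrix.transpose_apply]
    refine Finset.sum_congr rfl fun c _ => Finset.sum_congr rfl fun q _ => ?_
    rw [mul_comm]
  let K := (((P × Q) × ωC) × ωB) × (T × (P × Q))
  let A : Matrix (ωA × T) K ℂ := Matrix.of fun i k => Z i k.1 * ψ k.2
  let B : Matrix (ωA × T) K ℂ := Matrix.of fun i k =>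
    Z (i.1, k.2.1) ((k.2.2, k.1.1.2), k.1.2) * ψ (i.2, k.1.1.1)
  have hA : A * Aᴴ = Y * Yᴴ := by
    rw [← hZ]
    ext i j
    simp only [A, K, Matrix.mul_apply, Matrix.of_apply, Matrix.conjTranspose_apply]
    rw [Fintype.sum_prod_type]
    refine Finset.sum_congr rfl fun k _ => ?_
    calc _ = Z i k * star (Z j k) * ∑ x, ψ x * star (ψ x) := by
          rw [Finset.mul_sum]
          refine Finset.sum_congr rfl fun x _ => ?_
          rw [star_mul']; ring
      _ = _ := by rw [hψ, mul_one]
  have hWZ : ∀ w w', (W * Wᴴ) w w' = ∑ t, (Z * Zᴴ) (w, t) (w', t) := by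
    intro w w'
    rw [hZ]
    simp only [W, Y, Matrix.mul_apply, Fintype.sum_prod_type, Matrix.of_apply,
      Matrix.conjTranspose_apply]
    exact sum_rot _
  have hB : B * Bᴴ = Matrix.kronecker (W * Wᴴ) ρT := by
    ext ⟨w, t⟩ ⟨w', t'⟩
    simp only [Matrix.kronecker, Matrix.kroneckerMap_apply]
    rw [hWZ, hρT]
    simp only [B, Matrix.mul_apply, Matrix.of_apply, Matrix.conjTranspose_apply]
    rw [← Fintype.sum_prod_type', ← Fintype.sum_prod_type', Finset.sum_mul_sum,
      ← Fintype.sum_prod_type']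
    refine Fintype.sum_equiv (⟨fun k => ((k.2.1, ((k.2.2, k.1.1.2), k.1.2)), k.1.1.1),
      fun y => (((y.2, y.1.2.1.2), y.1.2.2), (y.1.1, y.1.2.1.1)), fun _ => rfl, fun _ => rfl⟩ :
      K ≃ (T × (((P × Q) × ωC) × ωB)) × (P × Q)) _ _ (fun k => ?_)
    simp only [Equiv.coe_fn_mk, star_mul']
    ring
  have hAB : (A * Bᴴ).trace = ∑ wA, ∑ wB, ∑ wC,
      (∑ x, star (ψ x) * outAmp ψ EA EB D x wA wB wC) *
        star (∑ x, star (ψ x) * outAmp ψ EA EB D x wA wB wC) := by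
    simp only [A, B, Matrix.trace, Matrix.diag_apply, Matrix.mul_apply,
      Matrix.of_apply, Matrix.conjTranspose_apply]
    have hR : (∑ wA, ∑ wB, ∑ wC,
      (∑ x, star (ψ x) * outAmp ψ EA EB D x wA wB wC) *
        star (∑ x, star (ψ x) * outAmp ψ EA EB D x wA wB wC)) =
        ∑ y : ωA × (ωB × (ωC × ((T × (P × Q)) × (T × (P × Q))))),
          (star (ψ y.2.2.2.1) * outAmp ψ EA EB D y.2.2.2.1 y.1 y.2.1 y.2.2.1) *
          star (star (ψ y.2.2.2.2) * outAmp ψ EA EB D y.2.2.2.2 y.1 y.2.1 y.2.2.1) := by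
      rw [Fintype.sum_prod_type]
      refine Finset.sum_congr rfl fun wA _ => ?_
      rw [Fintype.sum_prod_type]
      refine Finset.sum_congr rfl fun wB _ => ?_
      rw [Fintype.sum_prod_type]
      refine Finset.sum_congr rfl fun wC _ => ?_
      rw [star_sum, Finset.sum_mul_sum, ← Fintype.sum_prod_type']
    rw [hR, ← Fintype.sum_prod_type']
    refine Fintype.sum_equiv (⟨fun z => (z.1.1, (z.2.1.2, (z.2.1.1.2, ((z.1.2, z.2.1.1.1), z.2.2)))),
      fun y => ((y.1, y.2.2.2.1.1), (((y.2.2.2.1.2, y.2.2.1), y.2.1), y.2.2.2.2)),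
      fun _ => rfl, fun _ => rfl⟩ :
      (ωA × T) × K ≃ ωA × (ωB × (ωC × ((T × (P × Q)) × (T × (P × Q)))))) _ _ ?_
    rintro ⟨⟨wA, t⟩, ⟨⟨⟨pq, wC⟩, wB⟩, ⟨t', pq'⟩⟩⟩
    simp only [Equiv.coe_fn_mk, hZout, star_mul', star_star]
    ring
  have trT : ρT.trace = 1 := by
    rw [← hψ]
    simp [Matrix.trace, hρT, Fintype.sum_prod_type]
  have psdT : ρT.PosSemidef := by
    have : ρT = (Matrix.of fun (t : T) (k : P × Q) => ψ (t, k)) *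
        (Matrix.of fun (t : T) (k : P × Q) => ψ (t, k))ᴴ := by
      ext t t'
      simp [hρT, Matrix.mul_apply, Fintype.sum_prod_type]
    rw [this]; exact PSD_gram _
  have sB : SS (B * Bᴴ) = SS (W * Wᴴ) + SS ρT := by
    rw [hB]; exact SS_kron _ _ (PSD_gram _) psdT trW trT
  obtain ⟨t, ht0, ht1, hts⟩ := SS_cont A B (by rw [hA, trY])
    (by rw [hB]; simp [Matrix.kronecker, Matrix.trace_kronecker, trW, trT]) θ h0 h1 (by rw [hAB]; exact hF)
  refine ⟨t, ht0, ht1, ?_⟩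
  rw [hA, sB] at hts
  linarith

end OneShot2

section IID

lemma sum_prod_fn {b : Type*} [Fintype b] {R : Type*} [CommSemiring R] (n : ℕ)
    (g : Fin n → b → R) : ∑ f : Fin n → b, ∏ k, g k (f k) = ∏ k, ∑ x, g k x := by
  rw [Finset.prod_univ_sum, Fintype.piFinset_univ]

/-- tensor power of a matrix -/
noncomputable def piM {a b : Type*} (M : Matrix a b ℂ) (n : ℕ) :
    Matrix (Fin n → a) (Fin n → b) ℂ :=
  Matrix.of fun f g => ∏ k, M (f k) (g k)

lemma piM_mul {a b c : Type*} [Fintype b] (M : Matrix a b ℂ) (N : Matrix b c ℂ) (n : ℕ) :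
    piM (M * N) n = piM M n * piM N n := by
  ext f g
  simp only [piM, Matrix.of_apply, Matrix.mul_apply, ← Finset.prod_mul_distrib]
  rw [← sum_prod_fn]

lemma piM_conjTranspose {a b : Type*} (M : Matrix a b ℂ) (n : ℕ) :
    piM Mᴴ n = (piM M n)ᴴ := by
  ext f g
  simp [piM, Matrix.conjTranspose_apply]

lemma piM_diagonal {a : Type*} [DecidableEq a] (d : a → ℂ) (n : ℕ) :
    piM (Matrix.diagonal d) n = Matrix.diagonal (fun f => ∏ k, d (f k)) := by
  ext f g
  by_cases h : f = g
  · subst h; simp [piM]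
  · rw [Matrix.diagonal_apply_ne _ h]
    obtain ⟨k, hk⟩ := Function.ne_iff.mp h
    simp only [piM, Matrix.of_apply]
    exact Finset.prod_eq_zero (Finset.mem_univ k) (Matrix.diagonal_apply_ne _ hk)

lemma sum_negMulLog_pi {a : Type*} [Fintype a] (d : a → ℝ) (h1 : ∑ i, d i = 1) (n : ℕ) :
    ∑ f : Fin n → a, Real.negMulLog (∏ k, d (f k)) = n * ∑ i, Real.negMulLog (d i) := by
  induction n with
  | zero => simp
  | succ n ih =>
    rw [← (Fin.consEquiv (fun _ : Fin (n + 1) => a)).sum_comp, Fintype.sum_prod_type]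
    simp only [Fin.consEquiv, Equiv.coe_fn_mk, Fin.prod_univ_succ, Fin.cons_zero, Fin.cons_succ,
      Real.negMulLog_mul, Finset.sum_add_distrib, ← Finset.sum_mul, ← Finset.mul_sum]
    rw [ih, h1, sum_prod_fn n (fun _ => d)]
    simp only [h1, Finset.prod_const_one]
    push_cast
    ring

lemma SS_piM {a : Type*} [Fintype a] [DecidableEq a] (ρ : Matrix a a ℂ) (hρ : ρ.PosSemidef)
    (htr : ρ.trace = 1) (n : ℕ) : SS (piM ρ n) = n * SS ρ := by
  obtain ⟨U, d, u1, u2, hd, hU, hUd, hS⟩ := exists_diag ρ hρ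
  have h1 : ∑ i, d i = 1 := by
    have : (Uᴴ * ρ * U).trace = 1 := by
      rw [Matrix.trace_mul_comm, ← Matrix.mul_assoc, u2, Matrix.one_mul, htr]
    rw [hUd, Matrix.trace_diagonal] at this
    exact_mod_cast this
  have h2 : piM ρ n = piM U n * Matrix.diagonal (fun f : Fin n → a => ((∏ k, d (f k) : ℝ) : ℂ)) *
      (piM U n)ᴴ := by
    conv_lhs => rw [hU]
    rw [piM_mul, piM_mul, piM_diagonal, piM_conjTranspose]
    simp only [Complex.ofReal_prod]
  have h3 : (piM U n)ᴴ * piM U n = 1 := by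
    rw [← piM_conjTranspose, ← piM_mul, u1, ← Matrix.diagonal_one, piM_diagonal]
    simp
  rw [h2, SS_diag _ _ h3, hS, sum_negMulLog_pi d h1]

lemma codeFidelity_eq {ιA ιB ιR : Type} {n : ℕ} {γA ωA γB ωB ωC : Type}
    [Fintype ιA] [Fintype ιB] [Fintype ιR] [DecidableEq ιR]
    [Fintype γA] [Fintype γB] [Fintype ωA] [Fintype ωB] [Fintype ωC]
    (φ : ιA × (ιB × ιR) → ℂ)
    (EA : Matrix (γA × ωA) (Fin n → ιA) ℂ)
    (EB : Matrix (γB × ωB) (Fin n → ιB) ℂ)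
    (D : Matrix (((Fin n → ιA) × (Fin n → ιB)) × ωC) (γA × γB) ℂ) :
    codeFidelity φ EA EB D = (∑ wA, ∑ wB, ∑ wC,
      (∑ x, star (iidVec φ n x) * outAmp (iidVec φ n) EA EB D x wA wB wC) *
        star (∑ x, star (iidVec φ n x) * outAmp (iidVec φ n) EA EB D x wA wB wC)).re := by
  set ψ := iidVec φ n with hψ
  have hout : ∀ x wA wB wC, (codeMap (ιR := ιR) EA EB D *ᵥ ψ) (x, ((wA, wB), wC)) =
      outAmp ψ EA EB D x wA wB wC := by
    rintro ⟨t, p, q⟩ wA wB wC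
    simp only [Matrix.mulVec, dotProduct, codeMap, Matrix.of_apply, outAmp, ite_mul, zero_mul]
    rw [Fintype.sum_prod_type, Finset.sum_eq_single t]
    · simp only [if_true, Fintype.sum_prod_type, Finset.sum_mul, Finset.mul_sum]
      rw [sum_rot]
      refine Finset.sum_congr rfl fun c _ => ?_
      rw [Finset.sum_comm]
      refine Finset.sum_congr rfl fun q _ => ?_
      refine Finset.sum_congr rfl fun p _ => ?_
      refine Finset.sum_congr rfl fun cB _ => ?_
      ring
    · intro t' _ h
      simp [Ne.symm h]
    · simp
  unfold codeFidelity
  congr 1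
  rw [← hψ, Matrix.mul_vecMulVec, Matrix.vecMulVec_mul, ← Matrix.star_mulVec]
  generalize hΨ : codeMap (ιR := ιR) EA EB D *ᵥ ψ = Ψ at hout ⊢
  have hR : (∑ wA, ∑ wB, ∑ wC, (∑ x, star (ψ x) * outAmp ψ EA EB D x wA wB wC) *
        star (∑ x, star (ψ x) * outAmp ψ EA EB D x wA wB wC)) =
      ∑ w : (ωA × ωB) × ωC, (∑ x, star (ψ x) * Ψ (x, w)) * star (∑ x, star (ψ x) * Ψ (x, w)) := by
    rw [Fintype.sum_prod_type, Fintype.sum_prod_type]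
    simp only [hout]
  rw [hR]
  simp only [dotProduct, Matrix.mulVec, Matrix.of_apply, Matrix.vecMulVec_apply, Pi.star_apply,
    star_sum, Finset.sum_mul_sum]
  simp only [Finset.sum_mul, Finset.mul_sum]
  rw [sum_rot]
  refine Finset.sum_congr rfl fun w _ => Finset.sum_congr rfl fun i _ =>
    Finset.sum_congr rfl fun j _ => ?_
  rw [star_mul', star_star]
  ring

end IID

section Final

lemma single_letter {ιA ιB ιR : Type} [Fintype ιA] [DecidableEq ιA] [Fintype ιB] [DecidableEq ιB]
    [Fintype ιR] [DecidableEq ιR]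
    (φ : ιA × (ιB × ιR) → ℂ) (hφ : ∑ x, φ x * star (φ x) = 1) :
    ∃ redB : Matrix ιB ιB ℂ, (∀ b b', redB b b' = ∑ a, ∑ r, φ (a, (b, r)) * star (φ (a, (b', r)))) ∧
      (redA φ).PosSemidef ∧ (redR φ).PosSemidef ∧ (redAR φ).PosSemidef ∧ redB.PosSemidef ∧
      (redA φ).trace = 1 ∧ (redR φ).trace = 1 ∧ redB.trace = 1 ∧
      SS (redAR φ) = SS redB ∧ SS (redR φ) ≤ SS (redA φ) + SS redB := by
  rw [Fintype.sum_prod_type] at hφ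
  simp only [Fintype.sum_prod_type] at hφ
  let MA : Matrix ιA (ιB × ιR) ℂ := Matrix.of fun a q => φ (a, q)
  let MB : Matrix ιB (ιA × ιR) ℂ := Matrix.of fun b q => φ (q.1, (b, q.2))
  let MR : Matrix (ιA × ιB) ιR ℂ := Matrix.of fun q r => φ (q.1, (q.2, r))
  have eA : redA φ = MA * MAᴴ := by
    ext a a'
    simp [redA, MA, Matrix.mul_apply]
  have eR : redR φ = MRᵀ * MRᵀᴴ := by
    ext a a'
    simp [redR, MR, Matrix.mul_apply, Fintype.sum_prod_type]
  have eAR : redAR φ = MBᵀ * MBᵀᴴ := by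
    ext a a'
    simp [redAR, MB, Matrix.mul_apply]
  have trA : (MA * MAᴴ).trace = 1 := by
    rw [← hφ]
    simp [MA, Matrix.mul_apply, Matrix.trace, Fintype.sum_prod_type]
  have trB : (MB * MBᴴ).trace = 1 := by
    rw [← hφ, Finset.sum_comm]
    simp [MB, Matrix.mul_apply, Matrix.trace, Fintype.sum_prod_type]
  have trR : (MR * MRᴴ).trace = 1 := by
    rw [← hφ]
    simp [MR, Matrix.mul_apply, Matrix.trace, Fintype.sum_prod_type]
  refine ⟨MB * MBᴴ, ?_, ?_, ?_, ?_, PSD_gram _, ?_, ?_, trB, ?_, ?_⟩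
  · intro b b'
    simp [MB, Matrix.mul_apply, Fintype.sum_prod_type]
  · rw [eA]; exact PSD_gram _
  · rw [eR]; exact PSD_gram _
  · rw [eAR]; exact PSD_gram _
  · rw [eA]; exact trA
  · rw [eR]
    have : MRᵀ * MRᵀᴴ = (MRᴴ * MR)ᵀ := by rw [Matrix.transpose_mul]; rfl
    rw [this, Matrix.trace_transpose, Matrix.trace_mul_comm, trR]
  · rw [eAR, SS_flip]
  · rw [eR, SS_flip, eA]
    exact sub_amp MR trR MA MB (fun _ _ _ => rfl) (fun _ _ _ => rfl)

lemma core {ιA ιB ιR : Type} [Fintype ιA] [DecidableEq ιA] [Fintype ιB] [DecidableEq ιB]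
    [Fintype ιR] [DecidableEq ιR]
    {γA ωA γB ωB ωC : Type} [Fintype γA] [DecidableEq γA] [Fintype ωA] [DecidableEq ωA]
    [Fintype γB] [DecidableEq γB] [Fintype ωB] [DecidableEq ωB]
    [Fintype ωC] [DecidableEq ωC]
    (φ : ιA × (ιB × ιR) → ℂ) (hφ : ∑ x, φ x * star (φ x) = 1)
    (hdR : Fintype.card ιR ≤ Fintype.card ιA * Fintype.card ιB)
    (n : ℕ) (hn : 1 ≤ n)
    (EA : Matrix (γA × ωA) (Fin n → ιA) ℂ) (hEA : EAᴴ * EA = 1)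
    (EB : Matrix (γB × ωB) (Fin n → ιB) ℂ) (hEB : EBᴴ * EB = 1)
    (D : Matrix (((Fin n → ιA) × (Fin n → ιB)) × ωC) (γA × γB) ℂ) (hD : Dᴴ * D = 1)
    (hWA : Fintype.card ωA ≤ Fintype.card ιA ^ (2 * n))
    (θ : ℝ) (hθ0 : 0 < θ) (hθ1 : 2 * θ ≤ Real.exp (-1))
    (hF : 1 - θ ^ 2 / 3 ≤ codeFidelity φ EA EB D) :
    (n : ℝ) * (SS (redA φ) + SS (redR φ) - SS (redAR φ)) ≤
      2 * Real.log (Fintype.card γA) + 2 * θ * (n : ℝ) *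
        Real.log ((Fintype.card ιA : ℝ) ^ 3 * (Fintype.card ιB : ℝ)) + Real.negMulLog (2 * θ) := by
  obtain ⟨redB, hB, pA, pR, pAR, pB, tA, tR, tB, sAR, sR⟩ := single_letter φ hφ
  have hne : Nonempty (ιA × (ιB × ιR)) := by
    by_contra h
    rw [not_nonempty_iff] at h
    simp at hφ
  obtain ⟨a0, b0, r0⟩ := hne
  have cA : 1 ≤ Fintype.card ιA := Fintype.card_pos_iff.mpr ⟨a0⟩
  have cB : 1 ≤ Fintype.card ιB := Fintype.card_pos_iff.mpr ⟨b0⟩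
  have cA' : (1 : ℝ) ≤ Fintype.card ιA := by exact_mod_cast cA
  have cB' : (1 : ℝ) ≤ Fintype.card ιB := by exact_mod_cast cB
  have he1 : Real.exp (-1) ≤ 1 := by rw [Real.exp_le_one_iff]; norm_num
  have hγ : 0 ≤ Real.log (Fintype.card γA) := Real.log_natCast_nonneg _
  have hn' : (1 : ℝ) ≤ n := by exact_mod_cast hn
  have hη : 0 ≤ Real.negMulLog (2 * θ) := Real.negMulLog_nonneg (by linarith) (by linarith)
  rw [sAR]
  set K := (Fintype.card ιA : ℝ) ^ 3 * (Fintype.card ιB : ℝ) with hK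
  have hK1 : 1 ≤ K := one_le_mul_of_one_le_of_one_le (one_le_pow₀ cA') cB'
  rcases cA.eq_or_lt with hA1 | hA2
  · -- trivial case
    have h1 := SS_le_card (redA φ) pA 1 (by rw [tA]; rfl)
    rw [← hA1] at h1
    simp at h1
    have h2 : (n : ℝ) * (SS (redA φ) + SS (redR φ) - SS redB) ≤ 0 :=
      mul_nonpos_of_nonneg_of_nonpos (by linarith) (by linarith)
    have h3 : 0 ≤ 2 * θ * (n : ℝ) * Real.log K := by
      have := Real.log_nonneg hK1
      positivity
    linarith
  · have hψ : ∑ x, iidVec φ n x * star (iidVec φ n x) = 1 := by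
      rw [Fintype.sum_prod_type]
      simp only [Fintype.sum_prod_type, iidVec, star_prod, ← Finset.prod_mul_distrib]
      simp only [fun (t : Fin n → ιR) (p : Fin n → ιA) =>
        sum_prod_fn n (fun k b => φ (p k, (b, t k)) * star (φ (p k, (b, t k))))]
      simp only [fun (t : Fin n → ιR) =>
        sum_prod_fn n (fun k a => ∑ b, φ (a, (b, t k)) * star (φ (a, (b, t k))))]
      rw [sum_prod_fn n (fun k r => ∑ a, ∑ b, φ (a, (b, r)) * star (φ (a, (b, r))))]
      rw [← sum_rot]
      rw [Fintype.sum_prod_type] at hφ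
      simp only [Fintype.sum_prod_type] at hφ
      rw [hφ]; simp
    obtain ⟨t, ht0, ht1, hts⟩ := oneshot (iidVec φ n) hψ EA hEA EB hEB D hD
      (piM (redA φ) n) (by
        intro p p'
        simp only [iidVec, star_prod, ← Finset.prod_mul_distrib, piM, redA, Matrix.of_apply,
          Fintype.sum_prod_type]
        simp only [fun (q : Fin n → ιB) => sum_prod_fn n (fun k r => φ (p k, (q k, r)) * star (φ (p' k, (q k, r))))]
        rw [sum_prod_fn n (fun k b => ∑ r, φ (p k, (b, r)) * star (φ (p' k, (b, r))))])
      (piM redB n) (by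
        intro p p'
        simp only [iidVec, star_prod, ← Finset.prod_mul_distrib, piM, hB, Matrix.of_apply]
        simp only [fun (a : Fin n → ιA) => sum_prod_fn n (fun k r => φ (a k, (p k, r)) * star (φ (a k, (p' k, r))))]
        rw [sum_prod_fn n (fun k a => ∑ r, φ (a, (p k, r)) * star (φ (a, (p' k, r))))])
      (piM (redR φ) n) (by
        intro p p'
        simp only [iidVec, star_prod, ← Finset.prod_mul_distrib, piM, redR, Matrix.of_apply]
        simp only [fun (a : Fin n → ιA) => sum_prod_fn n (fun k b => φ (a k, (b, p k)) * star (φ (a k, (b, p' k))))]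
        rw [sum_prod_fn n (fun k a => ∑ b, φ (a, (b, p k)) * star (φ (a, (b, p' k))))])
      θ hθ0 (by linarith) (by rw [← codeFidelity_eq]; exact hF)
    rw [SS_piM _ pA tA, SS_piM _ pB tB, SS_piM _ pR tR] at hts
    have hcard : Real.log (Fintype.card (ωA × (Fin n → ιR))) ≤ n * Real.log K := by
      have h1 : Fintype.card (ωA × (Fin n → ιR)) ≤
          (Fintype.card ιA ^ 3 * Fintype.card ιB) ^ n := by
        rw [Fintype.card_prod, Fintype.card_fun, Fintype.card_fin]
        calc _ ≤ Fintype.card ιA ^ (2 * n) * (Fintype.card ιA * Fintype.card ιB) ^ n :=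
              Nat.mul_le_mul hWA (Nat.pow_le_pow_left hdR n)
          _ = _ := by rw [pow_mul, ← mul_pow]; ring
      rw [← Real.log_pow]
      rcases Nat.eq_zero_or_pos (Fintype.card (ωA × (Fin n → ιR))) with h | h
      · rw [h]; simp only [Nat.cast_zero, Real.log_zero]
        exact Real.log_nonneg (one_le_pow₀ hK1)
      · apply Real.log_le_log (by exact_mod_cast h)
        rw [hK]; exact_mod_cast h1
    have hlK : 2 ≤ n * Real.log K := by
      have h8 : (8 : ℝ) ≤ K := by
        have : (2 : ℝ) ≤ Fintype.card ιA := by exact_mod_cast hA2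
        have h3 : (2 : ℝ) ^ 3 ≤ (Fintype.card ιA : ℝ) ^ 3 := by gcongr
        rw [hK]; nlinarith
      have h9 : Real.log 8 ≤ Real.log K := Real.log_le_log (by norm_num) h8
      have h10 : Real.log 8 = 3 * Real.log 2 := by
        rw [show (8 : ℝ) = 2 ^ 3 by norm_num, Real.log_pow]; norm_num
      have := Real.log_two_gt_d9
      nlinarith
    have hmono := negMulLog_mono t (2 * θ) ht0 (by linarith) hθ1
    have a1 : t * Real.log (Fintype.card (ωA × (Fin n → ιR))) ≤ θ * (n * Real.log K) :=
      (mul_le_mul_of_nonneg_left hcard ht0).trans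
        (mul_le_mul_of_nonneg_right ht1 (by linarith))
    have a2 : t * (1 + t) ≤ θ * (n * Real.log K) := by
      apply mul_le_mul ht1 _ (by linarith) hθ0.le
      linarith
    calc _ = (n : ℝ) * SS (redA φ) + n * SS (redR φ) - n * SS redB := by ring
      _ ≤ _ := hts
      _ ≤ _ := by linarith

end Final

/-- **Finite-blocklength converse for distributed compression (individual rate).**
For a distributed compression code on `n` copies of a pure state `φ^{ABR}` with
isometric encoders and decoder, `d_{W_A} ≤ d_A^{2n}`, `d_R ≤ d_A d_B`, and fidelity at
least `1 − ε` for some `0 < ε ≤ 1/(12e²)`,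
`2 log₂ d_{C_A} ≥ n I(A;R)_φ − 2√(3ε) n log₂(d_A³ d_B) − η(2√(3ε))`
where `η(x) = −x log₂ x`. -/
theorem distributed_compression_rate_converse
    {ιA ιB ιR : Type} [Fintype ιA] [DecidableEq ιA] [Fintype ιB] [DecidableEq ιB]
    [Fintype ιR] [DecidableEq ιR]
    {γA ωA γB ωB ωC : Type} [Fintype γA] [DecidableEq γA] [Fintype ωA] [DecidableEq ωA]
    [Fintype γB] [DecidableEq γB] [Fintype ωB] [DecidableEq ωB]
    [Fintype ωC] [DecidableEq ωC]
    (φ : ιA × (ιB × ιR) → ℂ) (hφ : star φ ⬝ᵥ φ = 1)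
    (hdR : Fintype.card ιR ≤ Fintype.card ιA * Fintype.card ιB)
    (n : ℕ) (hn : 1 ≤ n)
    (EA : Matrix (γA × ωA) (Fin n → ιA) ℂ) (hEA : EAᴴ * EA = 1)
    (EB : Matrix (γB × ωB) (Fin n → ιB) ℂ) (hEB : EBᴴ * EB = 1)
    (D : Matrix (((Fin n → ιA) × (Fin n → ιB)) × ωC) (γA × γB) ℂ) (hD : Dᴴ * D = 1)
    (hWA : Fintype.card ωA ≤ Fintype.card ιA ^ (2 * n))
    (ε : ℝ) (hε0 : 0 < ε) (hε1 : ε ≤ 1 / (12 * Real.exp 1 ^ 2))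
    (hF : 1 - ε ≤ codeFidelity φ EA EB D) :
    2 * Real.logb 2 (Fintype.card γA) ≥
      (n : ℝ) * (vnEntropy (redA φ) + vnEntropy (redR φ) - vnEntropy (redAR φ))
        - 2 * Real.sqrt (3 * ε) * (n : ℝ)
            * Real.logb 2 ((Fintype.card ιA : ℝ) ^ 3 * (Fintype.card ιB : ℝ))
        - (-(2 * Real.sqrt (3 * ε)) * Real.logb 2 (2 * Real.sqrt (3 * ε))) := by
  have hφ' : ∑ x, φ x * star (φ x) = 1 := by
    rw [← hφ]
    simp [dotProduct, mul_comm]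
  have hθ : Real.sqrt (3 * ε) ^ 2 = 3 * ε := Real.sq_sqrt (by linarith)
  have hθ0 : 0 < Real.sqrt (3 * ε) := Real.sqrt_pos.mpr (by linarith)
  have hθ1 : 2 * Real.sqrt (3 * ε) ≤ Real.exp (-1) := by
    apply le_of_sq_le_sq _ (Real.exp_pos _).le
    rw [mul_pow, hθ, Real.exp_neg, inv_pow]
    have he : (0 : ℝ) < Real.exp 1 ^ 2 := by positivity
    rw [le_div_iff₀ (by positivity)] at hε1
    rw [← one_div, le_div_iff₀ he]
    linarith
  have h := core φ hφ' hdR n hn EA hEA EB hEB D hD hWA (Real.sqrt (3 * ε)) hθ0 hθ1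
    (by rw [hθ]; linarith)
  obtain ⟨_, _, pA, pR, pAR, _⟩ := single_letter φ hφ'
  rw [vnEntropy_eq_SS _ pA.1, vnEntropy_eq_SS _ pR.1, vnEntropy_eq_SS _ pAR.1]
  have hL : 0 < Real.log 2 := Real.log_pos (by norm_num)
  rw [ge_iff_le]
  simp only [Real.logb]
  unfold Real.negMulLog at h
  have h2 := div_le_div_of_nonneg_right h hL.le
  have e1 : (n : ℝ) * (SS (redA φ) + SS (redR φ) - SS (redAR φ)) / Real.log 2 =
    (n : ℝ) * (SS (redA φ) / Real.log 2 + SS (redR φ) / Real.log 2 - SS (redAR φ) / Real.log 2) := by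
    ring
  rw [e1, add_div, add_div] at h2
  have e2 : ∀ x y : ℝ, x * y / Real.log 2 = x * (y / Real.log 2) := fun x y => mul_div_assoc _ _ _
  simp only [e2] at h2
  linarith
end
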